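/- arXiv:1910.05122 — 5 statements merged into one kernel-verified Lean document; each statement's English description precedes it below -/
import Mathlib

section
/- Let Z ⊂ ℝ² be a finite nonempty set, let α ∈ (−2,2), and let d > 0 satisfy d ≤ ‖z − z'‖ for all distinct z, z' ∈ Z. Define the weight ρ : ℝ² → ℝ by ρ(x) = ‖x − z‖^α if there exists z ∈ Z with ‖x − z‖ < d/2 (such z is unique), and ρ(x) = 1 if ‖x − z‖ ≥ d/2 for every z ∈ Z. Then ρ belongs to the Muckenhoupt class A₂ on ℝ²: there exists C > 0 such that for every open Euclidean ball B ⊂ ℝ², ( (1/|B|) ∫_B ρ(x) dx ) · ( (1/|B|) ∫_B ρ(x)^{−1} dx ) ≤ C. -/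
open MeasureTheory Metric

/-!
The weight `ρ⁻¹` is the same kind of weight with exponent `-α`, so it is enough to bound, for every
exponent `β ∈ (-2, 2)`, the average of the weight over a ball of radius `r` by `C * m ^ β`, where
`m > 0` depends on the ball but not on `β`: in the product for `α` and `-α` the powers of `m` cancel.

* If `r ≥ d / 8`, take `m = 1`: the weight is at most `1` plus the finitely many local
  singularities, each of which has a finite integral, and the ball has area at least `π (d / 8)²`
  (`avg_large`).
* If every point of the ball has distance at least `d / 4` from `Z`, take `m = 1`: the weight is
  bounded there (`avg_far`).
* Otherwise the ball lies in `ball z (d / 2)` for some `z ∈ Z`, where the weight is `‖x - z‖ ^ β`,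
  and `m = max ‖x₀ - z‖ r` (`avg_power`). If `2 r ≤ ‖x₀ - z‖` then `‖x - z‖` is comparable to
  `‖x₀ - z‖` on the ball; otherwise the ball lies in `ball z (3 r)`, over which the integral of the
  power is a multiple of `r ^ (2 + β)` by homogeneity.
-/

/-- The Euclidean plane. -/
local notation "Plane" => EuclideanSpace ℝ (Fin 2)

lemma volume_ball_toReal (x : Plane) {r : ℝ} (hr : 0 < r) :
    (volume (ball x r)).toReal = r ^ 2 * Real.pi := by
  rw [EuclideanSpace.volume_ball_fin_two, ENNReal.toReal_mul, ENNReal.toReal_pow,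
    ENNReal.toReal_ofReal hr.le, ENNReal.toReal_ofReal Real.pi_pos.le]

lemma preimage_sub_ball (z : Plane) (R : ℝ) : (fun x : Plane => x - z) ⁻¹' ball 0 R = ball z R := by
  ext x
  simp [dist_eq_norm]

lemma integrableOn_power {β : ℝ} (hβ : -2 < β) (z : Plane) {R : ℝ} (hR : 0 < R) :
    IntegrableOn (fun x : Plane => ‖x - z‖ ^ β) (ball z R) := by
  have h0 : IntegrableOn (fun x : Plane => ‖x‖ ^ β) (ball 0 R) := by
    rw [integrableOn_fun_norm_addHaar volume (f := fun y : ℝ => y ^ β)]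
    have h1 : IntegrableOn (fun y : ℝ => y ^ (1 + β)) (Set.Ioo 0 R) :=
      (intervalIntegral.integrableOn_Ioo_rpow_iff hR).2 (by linarith)
    refine h1.congr_fun (fun y hy => ?_) measurableSet_Ioo
    simp [Real.rpow_add hy.1]
  have h := ((measurePreserving_sub_right (volume : Measure Plane) z).integrableOn_comp_preimage
    (MeasurableEquiv.subRight z).measurableEmbedding (s := ball 0 R)).2 h0
  rwa [preimage_sub_ball] at h

/-- Homogeneity of the power weight: its integral over a centred disc scales like `R ^ (2 + β)`. -/
lemma integral_power (β : ℝ) (z : Plane) {R : ℝ} (hR : 0 < R) :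
    ∫ x in ball z R, ‖x - z‖ ^ β = R ^ 2 * R ^ β * ∫ x in ball (0 : Plane) 1, ‖x‖ ^ β := by
  have h := (measurePreserving_sub_right (volume : Measure Plane) z).setIntegral_preimage_emb
    (MeasurableEquiv.subRight z).measurableEmbedding (fun x => ‖x‖ ^ β) (ball 0 R)
  rw [preimage_sub_ball] at h
  rw [h]
  have h2 := Measure.setIntegral_comp_smul_of_pos (volume : Measure Plane)
    (fun x => ‖x‖ ^ β) (ball 0 1) hR
  rw [smul_unitBall_of_pos hR] at h2
  have h3 : ∀ x : Plane, ‖R • x‖ ^ β = R ^ β * ‖x‖ ^ β := fun x => by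
    rw [norm_smul, Real.norm_of_nonneg hR.le, Real.mul_rpow hR.le (norm_nonneg _)]
  simp only [h3, integral_const_mul, finrank_euclideanSpace_fin, smul_eq_mul] at h2
  rw [mul_assoc, h2]
  field_simp

lemma integral_unit_nonneg (β : ℝ) : 0 ≤ ∫ x in ball (0 : Plane) 1, ‖x‖ ^ β :=
  integral_nonneg fun _ => Real.rpow_nonneg (norm_nonneg _) _

lemma avg_le_of_setIntegral_le {f : Plane → ℝ} {x₀ : Plane} {r c : ℝ} (hr : 0 < r)
    (h : ∫ x in ball x₀ r, f x ≤ c * (r ^ 2 * Real.pi)) :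
    (volume (ball x₀ r)).toReal⁻¹ * ∫ x in ball x₀ r, f x ≤ c := by
  have := Real.pi_pos
  rw [volume_ball_toReal x₀ hr, inv_mul_le_iff₀ (by positivity)]
  linarith

/-- No measurability of `f` is needed: the integral of a non-integrable function is `0`. -/
lemma setIntegral_ball_le {f g : Plane → ℝ} {x₀ : Plane} {r : ℝ} (hg : IntegrableOn g (ball x₀ r))
    (h0 : ∀ x ∈ ball x₀ r, 0 ≤ f x) (h : ∀ x ∈ ball x₀ r, f x ≤ g x) :
    ∫ x in ball x₀ r, f x ≤ ∫ x in ball x₀ r, g x :=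
  integral_mono_of_nonneg (ae_restrict_of_forall_mem measurableSet_ball h0) hg
    (ae_restrict_of_forall_mem measurableSet_ball h)

lemma avg_le_of_le {f : Plane → ℝ} {x₀ : Plane} {r c : ℝ} (hr : 0 < r)
    (h0 : ∀ x ∈ ball x₀ r, 0 ≤ f x) (h : ∀ x ∈ ball x₀ r, f x ≤ c) :
    (volume (ball x₀ r)).toReal⁻¹ * ∫ x in ball x₀ r, f x ≤ c := by
  refine avg_le_of_setIntegral_le hr ?_
  refine (setIntegral_ball_le (g := fun _ => c)
    (integrableOn_const measure_ball_lt_top.ne) h0 h).trans_eq ?_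
  rw [setIntegral_const, measureReal_def, volume_ball_toReal x₀ hr, smul_eq_mul, mul_comm]

/-- If `t` and `s` are comparable up to a factor `2`, their powers of exponent in `(-2, 2)` are
comparable up to a factor `4`. -/
lemma rpow_le_four_mul {β t s : ℝ} (h1 : -2 < β) (h2 : β < 2) (hs : 0 < s)
    (hl : s / 2 ≤ t) (hu : t ≤ 2 * s) : t ^ β ≤ 4 * s ^ β := by
  have ht : 0 < t := by linarith
  have key : ∀ b : ℝ, b < 2 → ∀ q : ℝ, 0 ≤ b → 0 < q → q ≤ 2 → q ^ b ≤ 4 := by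
    intro b hb q hb0 hq hq2
    calc q ^ b ≤ 2 ^ b := Real.rpow_le_rpow hq.le hq2 hb0
      _ ≤ 2 ^ (2 : ℝ) := Real.rpow_le_rpow_of_exponent_le (by norm_num) hb.le
      _ = 4 := by norm_num
  rw [← div_le_iff₀ (by positivity), ← Real.div_rpow ht.le hs.le]
  rcases le_total 0 β with hb | hb
  · exact key β h2 _ hb (by positivity) (by rw [div_le_iff₀ hs]; linarith)
  · have := key (-β) (by linarith) (s / t) (by linarith) (by positivity)
      (by rw [div_le_iff₀ ht]; linarith)
    rwa [Real.rpow_neg (by positivity), ← Real.inv_rpow (by positivity), inv_div] at this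

/-- The average of a power weight over any disc is controlled by the power of
`max ‖x₀ - z‖ r`. -/
lemma avg_power {β : ℝ} (h1 : -2 < β) (h2 : β < 2) :
    ∃ C : ℝ, 0 < C ∧ ∀ (z x₀ : Plane) (r : ℝ), 0 < r →
      (volume (ball x₀ r)).toReal⁻¹ * ∫ x in ball x₀ r, ‖x - z‖ ^ β
        ≤ C * (max ‖x₀ - z‖ r) ^ β := by
  obtain ⟨K, hK⟩ : ∃ K, K = ∫ x in ball (0 : Plane) 1, ‖x‖ ^ β := ⟨_, rfl⟩
  have hK0 : 0 ≤ K := hK ▸ integral_unit_nonneg β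
  have hpi := Real.pi_pos
  refine ⟨4 + 9 * 3 ^ β * K * 4 / Real.pi, by positivity, fun z x₀ r hr => ?_⟩
  have hnn : ∀ x : Plane, 0 ≤ ‖x - z‖ ^ β := fun x => Real.rpow_nonneg (norm_nonneg _) _
  obtain ⟨m, hm⟩ : ∃ m, m = max ‖x₀ - z‖ r := ⟨_, rfl⟩
  rw [← hm]
  have hrm : r ≤ m := hm ▸ le_max_right _ _
  have hm0 : 0 < m := hr.trans_le hrm
  have hmb : 0 < m ^ β := Real.rpow_pos_of_pos hm0 _
  rw [add_mul]
  rcases le_or_gt (2 * r) ‖x₀ - z‖ with hfar | hnear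
  · have hmeq : m = ‖x₀ - z‖ := hm.trans <| max_eq_left (by linarith)
    have : (volume (ball x₀ r)).toReal⁻¹ * ∫ x in ball x₀ r, ‖x - z‖ ^ β ≤ 4 * m ^ β := by
      refine avg_le_of_le hr (fun x _ => hnn x) fun x hx => ?_
      rw [mem_ball, dist_eq_norm] at hx
      have t1 : ‖x - z‖ ≤ ‖x - x₀‖ + ‖x₀ - z‖ := norm_sub_le_norm_sub_add_norm_sub x x₀ z
      have t2 : ‖x₀ - z‖ ≤ ‖x₀ - x‖ + ‖x - z‖ := norm_sub_le_norm_sub_add_norm_sub x₀ x z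
      rw [norm_sub_rev x₀ x] at t2
      exact rpow_le_four_mul h1 h2 hm0 (by linarith) (by linarith)
    have : 0 ≤ 9 * 3 ^ β * K * 4 / Real.pi * m ^ β := by positivity
    linarith
  · have hsub : ball x₀ r ⊆ ball z (3 * r) :=
      ball_subset_ball' (by rw [dist_eq_norm]; linarith)
    have hI : ∫ x in ball x₀ r, ‖x - z‖ ^ β ≤ (3 * r) ^ 2 * (3 * r) ^ β * K := by
      rw [hK, ← integral_power β z (by positivity)]
      exact setIntegral_mono_set (integrableOn_power h1 z (by positivity))
        (ae_of_all _ hnn) hsub.eventuallyLE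
    have hrb : r ^ β ≤ 4 * m ^ β :=
      rpow_le_four_mul h1 h2 hm0
        (by have : m ≤ 2 * r := hm ▸ max_le hnear.le (by linarith)
            linarith) (by linarith)
    have : (volume (ball x₀ r)).toReal⁻¹ * ∫ x in ball x₀ r, ‖x - z‖ ^ β
        ≤ 9 * 3 ^ β * K * 4 / Real.pi * m ^ β := by
      refine avg_le_of_setIntegral_le hr (hI.trans ?_)
      rw [Real.mul_rpow (by norm_num) hr.le]
      calc (3 * r) ^ 2 * (3 ^ β * r ^ β) * K = (9 * r ^ 2 * 3 ^ β * K) * r ^ β := by ring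
        _ ≤ (9 * r ^ 2 * 3 ^ β * K) * (4 * m ^ β) := by gcongr
        _ = _ := by field_simp
    linarith

/-- `w` is the weight of exponent `β` attached to the point set `Z` and the separation `d`. -/
def IsPiecewiseWeight (Z : Finset (EuclideanSpace ℝ (Fin 2))) (d β : ℝ)
    (w : EuclideanSpace ℝ (Fin 2) → ℝ) : Prop :=
  (∀ x, ∀ z ∈ Z, ‖x - z‖ < d / 2 → w x = ‖x - z‖ ^ β) ∧
    ∀ x, (∀ z ∈ Z, d / 2 ≤ ‖x - z‖) → w x = 1

lemma IsPiecewiseWeight.inv {Z : Finset Plane} {d β : ℝ} {w : Plane → ℝ}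
    (hw : IsPiecewiseWeight Z d β w) : IsPiecewiseWeight Z d (-β) (fun x => (w x)⁻¹) :=
  ⟨fun x z hz h => by simp only [hw.1 x z hz h, Real.rpow_neg (norm_nonneg _)],
    fun x h => by simp [hw.2 x h]⟩

lemma IsPiecewiseWeight.nonneg {Z : Finset Plane} {d β : ℝ} {w : Plane → ℝ}
    (hw : IsPiecewiseWeight Z d β w) (x : Plane) : 0 ≤ w x := by
  by_cases h : ∀ z ∈ Z, d / 2 ≤ ‖x - z‖
  · rw [hw.2 x h]
    exact zero_le_one
  · push Not at h
    obtain ⟨z, hz, h⟩ := h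
    rw [hw.1 x z hz h]
    exact Real.rpow_nonneg (norm_nonneg _) _

lemma avg_large {β : ℝ} (h1 : -2 < β) (Z : Finset Plane) {d : ℝ} (hd : 0 < d) :
    ∃ C : ℝ, 0 < C ∧ ∀ w, IsPiecewiseWeight Z d β w → ∀ (x₀ : Plane) (r : ℝ), d / 8 ≤ r →
      (volume (ball x₀ r)).toReal⁻¹ * ∫ x in ball x₀ r, w x ≤ C := by
  classical
  set J := (d / 2) ^ 2 * (d / 2) ^ β * ∫ x in ball (0 : Plane) 1, ‖x‖ ^ β with hJ
  have hJ0 : 0 ≤ J := by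
    have := integral_unit_nonneg β
    positivity
  have hpi := Real.pi_pos
  refine ⟨1 + Z.card * J / ((d / 8) ^ 2 * Real.pi), by positivity, fun w hw x₀ r hdr => ?_⟩
  have hr : 0 < r := by linarith
  refine avg_le_of_setIntegral_le hr ?_
  -- The singular part of the weight at `z`, extended by zero.
  let s : Plane → Plane → ℝ := fun z => (ball z (d / 2)).indicator fun x => ‖x - z‖ ^ β
  have hs0 : ∀ z x, 0 ≤ s z x := fun z x =>
    Set.indicator_nonneg (fun _ _ => Real.rpow_nonneg (norm_nonneg _) _) x
  have hsi : ∀ z, Integrable (s z) := fun z =>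
    (integrable_indicator_iff measurableSet_ball).2 (integrableOn_power h1 z (by positivity))
  have hsum : Integrable (fun x => ∑ z ∈ Z, s z x) := integrable_finsetSum _ fun z _ => hsi z
  have hone : IntegrableOn (fun _ : Plane => (1 : ℝ)) (ball x₀ r) :=
    integrableOn_const measure_ball_lt_top.ne
  have hle : ∀ x, w x ≤ 1 + ∑ z ∈ Z, s z x := by
    intro x
    have hS : 0 ≤ ∑ z ∈ Z, s z x := Finset.sum_nonneg fun z _ => hs0 z x
    by_cases h : ∀ z ∈ Z, d / 2 ≤ ‖x - z‖
    · rw [hw.2 x h]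
      linarith
    · push Not at h
      obtain ⟨z, hz, h⟩ := h
      have hsz : s z x = w x := by
        rw [hw.1 x z hz h]
        exact Set.indicator_of_mem (by rwa [mem_ball, dist_eq_norm]) _
      have := Finset.single_le_sum (fun z _ => hs0 z x) hz
      linarith
  have hint : ∀ z, ∫ x in ball x₀ r, s z x ≤ J := fun z => by
    rw [hJ, ← integral_power β z (by positivity),
      ← integral_indicator (measurableSet_ball (x := z))]
    exact setIntegral_le_integral (hsi z) (ae_of_all _ (hs0 z))
  calc ∫ x in ball x₀ r, w x
      ≤ ∫ x in ball x₀ r, (1 + ∑ z ∈ Z, s z x) :=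
        setIntegral_ball_le (hone.add hsum.integrableOn) (fun x _ => hw.nonneg x) fun x _ => hle x
    _ = r ^ 2 * Real.pi + ∑ z ∈ Z, ∫ x in ball x₀ r, s z x := by
        rw [integral_add hone hsum.integrableOn,
          integral_finsetSum _ fun z _ => (hsi z).integrableOn, setIntegral_const,
          measureReal_def, volume_ball_toReal x₀ hr, smul_eq_mul, mul_one]
    _ ≤ r ^ 2 * Real.pi + Z.card * J := by
        gcongr
        simpa using Finset.sum_le_card_nsmul Z _ J fun z _ => hint z
    _ ≤ (1 + Z.card * J / ((d / 8) ^ 2 * Real.pi)) * (r ^ 2 * Real.pi) := by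
        rw [add_mul, one_mul]
        refine add_le_add le_rfl ?_
        rw [div_mul_eq_mul_div, le_div_iff₀ (by positivity)]
        gcongr

lemma avg_far (β : ℝ) (Z : Finset Plane) {d : ℝ} (hd : 0 < d) :
    ∃ C : ℝ, 0 < C ∧ ∀ w, IsPiecewiseWeight Z d β w → ∀ (x₀ : Plane) (r : ℝ), 0 < r →
      (∀ x ∈ ball x₀ r, ∀ z ∈ Z, d / 4 ≤ ‖x - z‖) →
      (volume (ball x₀ r)).toReal⁻¹ * ∫ x in ball x₀ r, w x ≤ C := by
  refine ⟨1 + (d / 4) ^ β + (d / 2) ^ β, by positivity, fun w hw x₀ r hr hfar => ?_⟩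
  refine avg_le_of_le hr (fun x _ => hw.nonneg x) fun x hx => ?_
  have p1 : 0 < (d / 4) ^ β := by positivity
  have p2 : 0 < (d / 2) ^ β := by positivity
  by_cases h : ∀ z ∈ Z, d / 2 ≤ ‖x - z‖
  · rw [hw.2 x h]
    linarith
  · push Not at h
    obtain ⟨z, hz, h⟩ := h
    have hl := hfar x hx z hz
    rw [hw.1 x z hz h]
    -- A power is monotone or antitone, so it is bounded by its values at the endpoints.
    rcases le_total 0 β with hb | hb
    · have := Real.rpow_le_rpow (norm_nonneg _) h.le hb
      linarith
    · have := Real.rpow_le_rpow_of_nonpos (by positivity) hl hb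
      linarith

lemma avg_nonneg {Z : Finset Plane} {d β : ℝ} {w : Plane → ℝ} (hw : IsPiecewiseWeight Z d β w)
    (x₀ : Plane) (r : ℝ) : 0 ≤ (volume (ball x₀ r)).toReal⁻¹ * ∫ x in ball x₀ r, w x :=
  mul_nonneg (inv_nonneg.2 ENNReal.toReal_nonneg) (integral_nonneg hw.nonneg)

/-- The three regimes with one constant. Neither the case distinction nor the scale
`max ‖x₀ - z‖ r` depends on `β`, so the bounds for `α` and `-α` can be multiplied. -/
lemma avg_bound {β : ℝ} (h1 : -2 < β) (h2 : β < 2) (Z : Finset Plane) {d : ℝ} (hd : 0 < d) :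
    ∃ C : ℝ, 0 < C ∧ ∀ w, IsPiecewiseWeight Z d β w → ∀ (x₀ : Plane) (r : ℝ), 0 < r →
      (d / 8 ≤ r ∨ (∀ x ∈ ball x₀ r, ∀ z ∈ Z, d / 4 ≤ ‖x - z‖) →
        (volume (ball x₀ r)).toReal⁻¹ * ∫ x in ball x₀ r, w x ≤ C) ∧
      (∀ z ∈ Z, ball x₀ r ⊆ ball z (d / 2) →
        (volume (ball x₀ r)).toReal⁻¹ * ∫ x in ball x₀ r, w x ≤ C * (max ‖x₀ - z‖ r) ^ β) := by
  obtain ⟨C₁, hC₁, H₁⟩ := avg_large h1 Z hd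
  obtain ⟨C₂, hC₂, H₂⟩ := avg_far β Z hd
  obtain ⟨C₃, hC₃, H₃⟩ := avg_power h1 h2
  refine ⟨C₁ + C₂ + C₃, by positivity, fun w hw x₀ r hr => ⟨?_, fun z hz hsub => ?_⟩⟩
  · rintro (h | h)
    · have := H₁ w hw x₀ r h
      linarith
    · have := H₂ w hw x₀ r hr h
      linarith
  · have hm : 0 < max ‖x₀ - z‖ r := lt_max_of_lt_right hr
    rw [setIntegral_congr_fun measurableSet_ball (g := fun x => ‖x - z‖ ^ β) fun x hx =>
      hw.1 x z hz (by rw [← dist_eq_norm]; exact hsub hx)]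
    refine (H₃ z x₀ r hr).trans ?_
    gcongr
    linarith

/-- The weight `ρ` equal to `‖x - z‖^α` near each point `z` of a finite separated set
`Z ⊂ ℝ²` (within distance `d/2`) and equal to `1` elsewhere belongs to the Muckenhoupt
class `A₂`, for `α ∈ (-2, 2)`. -/
theorem piecewise_distance_weight_muckenhoupt_A2
    (Z : Finset (EuclideanSpace ℝ (Fin 2))) (hZ : Z.Nonempty)
    (α : ℝ) (hα : α ∈ Set.Ioo (-2 : ℝ) 2)
    (d : ℝ) (hd : 0 < d)
    (hsep : ∀ z ∈ Z, ∀ z' ∈ Z, z ≠ z' → d ≤ ‖z - z'‖)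
    (ρ : EuclideanSpace ℝ (Fin 2) → ℝ)
    (hρ_near : ∀ x : EuclideanSpace ℝ (Fin 2), ∀ z ∈ Z, ‖x - z‖ < d / 2 → ρ x = ‖x - z‖ ^ α)
    (hρ_far : ∀ x : EuclideanSpace ℝ (Fin 2), (∀ z ∈ Z, d / 2 ≤ ‖x - z‖) → ρ x = 1) :
    ∃ C : ℝ, 0 < C ∧
      ∀ (x₀ : EuclideanSpace ℝ (Fin 2)) (r : ℝ), 0 < r →
        ((volume (ball x₀ r)).toReal⁻¹ * ∫ x in ball x₀ r, ρ x) *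
          ((volume (ball x₀ r)).toReal⁻¹ * ∫ x in ball x₀ r, (ρ x)⁻¹) ≤ C := by
  -- The weight and its inverse are treated by the same bounds, for the exponents `α` and `-α`.
  have hw : IsPiecewiseWeight Z d α ρ := ⟨hρ_near, hρ_far⟩
  obtain ⟨C, hC, H⟩ := avg_bound hα.1 hα.2 Z hd
  obtain ⟨C', hC', H'⟩ := avg_bound (β := -α) (by linarith [hα.2]) (by linarith [hα.1]) Z hd
  refine ⟨C * C', by positivity, fun x₀ r hr => ?_⟩
  obtain ⟨A, B⟩ := H ρ hw x₀ r hr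
  obtain ⟨A', B'⟩ := H' _ hw.inv x₀ r hr
  by_cases h : d / 8 ≤ r ∨ (∀ x ∈ ball x₀ r, ∀ z ∈ Z, d / 4 ≤ ‖x - z‖)
  · exact mul_le_mul (A h) (A' h) (avg_nonneg hw.inv x₀ r) hC.le
  · push Not at h
    obtain ⟨hrd, x, hx, z, hz, hxz⟩ := h
    -- The ball has diameter less than `d / 4` and meets `ball z (d / 4)`.
    have hsub : ball x₀ r ⊆ ball z (d / 2) := by
      refine ball_subset_ball' ?_
      rw [← dist_eq_norm] at hxz
      have := dist_triangle x₀ x z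
      rw [mem_ball, dist_comm] at hx
      linarith
    have hm : 0 < max ‖x₀ - z‖ r := lt_max_of_lt_right hr
    refine (mul_le_mul (B z hz hsub) (B' z hz hsub) (avg_nonneg hw.inv x₀ r)
      (by positivity)).trans_eq ?_
    rw [Real.rpow_neg hm.le]
    have := (Real.rpow_pos_of_pos hm α).ne'
    field_simp
end

section
/- Let Ω ⊂ ℝ² be a bounded open set, let z ∈ Ω, and let α ∈ (0,2). Then there exists a constant C > 0 such that for every smooth function v : ℝ² → ℝ with compact support contained in Ω, one has |v(z)|² ≤ C ∫_Ω ‖x − z‖^{−α} ‖∇v(x)‖² dx. In other words, the Dirac delta δ_z is a bounded linear functional on smooth compactly supported functions with respect to the weighted gradient norm ‖∇v‖_{L²(d_z^{−α},Ω)}. -/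
open MeasureTheory

/-!
On each ray `r ↦ z + r • e` issuing from `z`, the function `v` vanishes at distance `R`, where
`Ω ⊆ ball z R`, so `|v z| ≤ ∫₀ᴿ ‖Dv (z + r • e)‖ dr`. Writing
`1 = r ^ ((α - 1) / 2) * r ^ ((1 - α) / 2)`, the Cauchy–Schwarz inequality gives
`|v z| ^ 2 ≤ (R ^ α / α) * ∫₀ᴿ r * (r ^ (-α) * ‖Dv (z + r • e)‖ ^ 2) dr`
(`sq_le_lintegral_of_eq_zero`); this is where `0 < α` is used. The extra factor `r` is the Jacobian
of polar coordinates, so integrating over the angle (`lintegral_polar_euclidean`) yields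
`2π |v z| ^ 2 ≤ (R ^ α / α) * ∫ ‖x - z‖ ^ (-α) * ‖Dv x‖ ^ 2`.

The argument runs with integrals valued in `[0, ∞]`. Passing back to the Bochner integral needs the
right-hand side to be integrable (`integrableOn_weight`), which is where `α < 2` is used.
-/

/-- The unit vector of `ℝ²` with polar angle `θ`. -/
noncomputable def unitDir (θ : ℝ) : EuclideanSpace ℝ (Fin 2) :=
  Complex.orthonormalBasisOneI.repr (Real.cos θ + Real.sin θ * Complex.I)

lemma norm_unitDir (θ : ℝ) : ‖unitDir θ‖ = 1 := by
  rw [unitDir, LinearIsometryEquiv.norm_map]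
  simp

lemma lintegral_polar_euclidean (z : EuclideanSpace ℝ (Fin 2))
    {F : EuclideanSpace ℝ (Fin 2) → ENNReal} (hF : Measurable F) :
    ∫⁻ θ in Set.Ioo (-Real.pi) Real.pi, ∫⁻ r in Set.Ioi (0 : ℝ),
      ENNReal.ofReal r * F (z + r • unitDir θ) = ∫⁻ x, F x := by
  set L := Complex.orthonormalBasisOneI.repr with hL
  have h1 : ∫⁻ x, F x = ∫⁻ w : ℂ, F (z + L w) := by
    rw [← lintegral_add_left_eq_self F z]
    exact (L.measurePreserving.lintegral_comp (hF.comp (measurable_const_add z))).symm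
  have h2 : ∀ p : ℝ × ℝ, L (Complex.polarCoord.symm p) = p.1 • unitDir p.2 := by
    intro p
    rw [unitDir, ← hL, ← map_smul, Complex.polarCoord_symm_apply, Complex.real_smul]
  have hu : Continuous unitDir := by
    unfold unitDir
    fun_prop
  rw [h1, ← Complex.lintegral_comp_polarCoord_symm, polarCoord_target, Measure.volume_eq_prod,
    ← Measure.prod_restrict, lintegral_prod_symm]
  · simp only [h2, smul_eq_mul]
  · simp only [h2, smul_eq_mul]
    have : Measurable fun p : ℝ × ℝ => z + p.1 • unitDir p.2 :=
      Continuous.measurable (by fun_prop)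
    exact ((ENNReal.measurable_ofReal.comp measurable_fst).mul (hF.comp this)).aemeasurable

/-- The weighted Cauchy–Schwarz estimate on one ray: `G` bounds the derivative of `g`, and `g`
vanishes at `R`. -/
lemma sq_le_lintegral_of_eq_zero {α R : ℝ} (hα : 0 < α) (hR : 0 < R) {g G : ℝ → ℝ}
    (hg : ContDiff ℝ 1 g) (hgR : g R = 0) (hG : Continuous G) (hgG : ∀ r, |deriv g r| ≤ G r) :
    ENNReal.ofReal (|g 0| ^ 2) ≤ ENNReal.ofReal (R ^ α / α) *
      ∫⁻ r in Set.Ioi (0 : ℝ), ENNReal.ofReal r * ENNReal.ofReal (r ^ (-α) * G r ^ 2) := by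
  have hG0 : ∀ r, 0 ≤ G r := fun r => (abs_nonneg _).trans (hgG r)
  have hftc : |g 0| ≤ ∫ r in Set.Ioc 0 R, G r := by
    have h := intervalIntegral.integral_deriv_eq_sub (a := 0) (b := R) (f := g)
      (fun x _ => (hg.differentiable one_ne_zero) x)
      ((hg.continuous_deriv le_rfl).intervalIntegrable _ _)
    rw [hgR, zero_sub] at h
    rw [← abs_neg, ← h, ← intervalIntegral.integral_of_le hR.le]
    exact (intervalIntegral.abs_integral_le_integral_abs hR.le).trans
      (intervalIntegral.integral_mono_on hR.le
        ((hg.continuous_deriv le_rfl).abs.intervalIntegrable _ _)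
        (hG.intervalIntegrable _ _) fun r _ => hgG r)
  have hA : ∫⁻ r in Set.Ioc 0 R, ENNReal.ofReal (r ^ ((α - 1) / 2)) ^ (2 : ℝ)
      = ENNReal.ofReal (R ^ α / α) := by
    have hint : IntervalIntegrable (fun r : ℝ => r ^ (α - 1)) volume 0 R :=
      intervalIntegral.intervalIntegrable_rpow' (by linarith)
    have hval : ∫ r in Set.Ioc 0 R, r ^ (α - 1) = R ^ α / α := by
      rw [← intervalIntegral.integral_of_le hR.le, integral_rpow (Or.inl (by linarith))]
      simp [Real.zero_rpow hα.ne']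
    rw [← hval, ofReal_integral_eq_lintegral_ofReal hint.1
      ((ae_restrict_mem measurableSet_Ioc).mono fun r hr => Real.rpow_nonneg hr.1.le _)]
    refine setLIntegral_congr_fun measurableSet_Ioc fun r hr => ?_
    rw [ENNReal.ofReal_rpow_of_nonneg (Real.rpow_nonneg hr.1.le _) (by norm_num),
      ← Real.rpow_mul hr.1.le]
    congr 2
    ring
  have hB : ∫⁻ r in Set.Ioc 0 R, ENNReal.ofReal (r ^ ((1 - α) / 2) * G r) ^ (2 : ℝ)
      ≤ ∫⁻ r in Set.Ioi (0 : ℝ), ENNReal.ofReal r * ENNReal.ofReal (r ^ (-α) * G r ^ 2) := by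
    refine le_trans (le_of_eq ?_)
      (lintegral_mono_set (Set.Ioc_subset_Ioi_self (a := R)))
    refine setLIntegral_congr_fun measurableSet_Ioc fun r hr => ?_
    have hr0 : 0 < r := hr.1
    rw [ENNReal.ofReal_rpow_of_nonneg (mul_nonneg (Real.rpow_nonneg hr0.le _) (hG0 r))
      (by norm_num), ← ENNReal.ofReal_mul hr0.le]
    congr 1
    rw [Real.mul_rpow (Real.rpow_nonneg hr0.le _) (hG0 r), ← Real.rpow_mul hr0.le,
      Real.rpow_two, ← mul_assoc]
    congr 1
    rw [show (1 - α) / 2 * 2 = 1 + -α by ring, Real.rpow_add hr0, Real.rpow_one]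
  have hH := ENNReal.lintegral_mul_le_Lp_mul_Lq (volume.restrict (Set.Ioc 0 R))
    Real.HolderConjugate.two_two
    (f := fun r => ENNReal.ofReal (r ^ ((α - 1) / 2)))
    (g := fun r => ENNReal.ofReal (r ^ ((1 - α) / 2) * G r))
    (by fun_prop) (by fun_prop)
  have hprod : ENNReal.ofReal |g 0| ≤ ∫⁻ r in Set.Ioc 0 R,
      ((fun r => ENNReal.ofReal (r ^ ((α - 1) / 2))) *
        fun r => ENNReal.ofReal (r ^ ((1 - α) / 2) * G r)) r := by
    refine (ENNReal.ofReal_le_ofReal hftc).trans (le_of_eq ?_)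
    rw [ofReal_integral_eq_lintegral_ofReal (hG.intervalIntegrable 0 R).1
      (Filter.Eventually.of_forall hG0)]
    refine setLIntegral_congr_fun measurableSet_Ioc fun r hr => ?_
    simp only [Pi.mul_apply]
    rw [← ENNReal.ofReal_mul (Real.rpow_nonneg hr.1.le _), ← mul_assoc, ← Real.rpow_add hr.1]
    rw [show (α - 1) / 2 + (1 - α) / 2 = 0 by ring, Real.rpow_zero, one_mul]
  have hfin := hprod.trans hH
  rw [hA, ← ENNReal.mul_rpow_of_nonneg _ _ (by norm_num : (0 : ℝ) ≤ 1 / 2)] at hfin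
  have hsq := ENNReal.rpow_le_rpow hfin (by norm_num : (0 : ℝ) ≤ 2)
  rw [← ENNReal.rpow_mul, ENNReal.ofReal_rpow_of_nonneg (abs_nonneg _) (by norm_num),
    Real.rpow_two] at hsq
  rw [show (1 / 2 * 2 : ℝ) = 1 by norm_num, ENNReal.rpow_one] at hsq
  exact hsq.trans (mul_le_mul_right hB _)

lemma integrableOn_weight (z : EuclideanSpace ℝ (Fin 2)) {α : ℝ} (hα : α < 2) (R : ℝ) :
    IntegrableOn (fun x => ‖x - z‖ ^ (-α)) (Metric.ball z R) := by
  have h0 : IntegrableOn (fun x : EuclideanSpace ℝ (Fin 2) => ‖x‖ ^ (-α)) (Metric.ball 0 R) := by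
    rw [integrableOn_fun_norm_addHaar volume (f := fun r => r ^ (-α))]
    have h : IntegrableOn (fun r : ℝ => r ^ (1 - α)) (Set.Ioo 0 R) := by
      rcases le_or_gt R 0 with hR | hR
      · simp [Set.Ioo_eq_empty_of_le hR]
      · exact ((intervalIntegral.intervalIntegrable_rpow' (a := 0) (b := R)
          (by linarith : -1 < 1 - α)).1).mono_set Set.Ioo_subset_Ioc_self
    refine h.congr_fun (fun r hr => ?_) measurableSet_Ioo
    simp [sub_eq_add_neg, Real.rpow_add hr.1]
  have hmp := measurePreserving_sub_right (volume : Measure (EuclideanSpace ℝ (Fin 2))) z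
  have h1 := (hmp.integrableOn_comp_preimage (MeasurableEquiv.subRight z).measurableEmbedding
    (f := fun x => ‖x‖ ^ (-α)) (s := Metric.ball 0 R)).2 h0
  have hball : Metric.ball z R = (fun x => x - z) ⁻¹' Metric.ball 0 R := by
    ext x
    simp [dist_eq_norm]
  rw [hball]
  exact h1

/-- For `α ∈ (0,2)`, the Dirac delta at `z ∈ Ω` is bounded with respect to the
weighted gradient norm `‖∇v‖_{L²(d_z^{-α}, Ω)}`: `|v(z)|² ≤ C ∫_Ω ‖x-z‖^{-α} ‖∇v‖²`. -/
theorem dirac_bounded_on_weighted_gradient_norm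
    (Ω : Set (EuclideanSpace ℝ (Fin 2))) (hΩo : IsOpen Ω) (hΩb : Bornology.IsBounded Ω)
    (z : EuclideanSpace ℝ (Fin 2)) (hz : z ∈ Ω)
    (α : ℝ) (hα : α ∈ Set.Ioo (0 : ℝ) 2) :
    ∃ C : ℝ, 0 < C ∧
      ∀ v : EuclideanSpace ℝ (Fin 2) → ℝ,
        ContDiff ℝ (⊤ : ℕ∞) v → HasCompactSupport v → tsupport v ⊆ Ω →
        |v z| ^ 2 ≤ C * ∫ x in Ω, ‖x - z‖ ^ (-α) * ‖fderiv ℝ v x‖ ^ 2 := by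
  obtain ⟨hα0, hα2⟩ := hα
  obtain ⟨R, hR, hΩR⟩ := hΩb.subset_ball_lt 0 z
  have hK : 0 < R ^ α / α := div_pos (Real.rpow_pos_of_pos hR _) hα0
  refine ⟨R ^ α / α / (2 * Real.pi), by positivity, fun v hv hcs hsupp => ?_⟩
  have hv1 : ContDiff ℝ 1 v := hv.of_le (by exact_mod_cast le_top)
  have hdv : Continuous (fderiv ℝ v) := hv1.continuous_fderiv one_ne_zero
  set f : EuclideanSpace ℝ (Fin 2) → ℝ := fun x => ‖x - z‖ ^ (-α) * ‖fderiv ℝ v x‖ ^ 2 with hf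
  have hf0 : ∀ x, 0 ≤ f x := fun x => by positivity
  have hfm : Measurable f := by
    have : Measurable fun x => ‖fderiv ℝ v x‖ := hdv.norm.measurable
    fun_prop
  have hfint : IntegrableOn f Ω := by
    obtain ⟨M, hM⟩ := (hcs.fderiv (𝕜 := ℝ)).exists_bound_of_continuous hdv
    refine ((integrableOn_weight z hα2 R).mono_set hΩR).mul_bdd (c := M ^ 2)
      (hdv.norm.pow 2).aestronglyMeasurable (Filter.Eventually.of_forall fun x => ?_)
    rw [Real.norm_of_nonneg (by positivity)]
    exact pow_le_pow_left₀ (norm_nonneg _) (hM x) 2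
  have hset : ∫⁻ x, ENNReal.ofReal (f x) = ENNReal.ofReal (∫ x in Ω, f x) := by
    rw [ofReal_integral_eq_lintegral_ofReal hfint (Filter.Eventually.of_forall hf0)]
    refine (setLIntegral_eq_of_support_subset ?_).symm
    intro x hx
    refine hsupp (tsupport_fderiv_subset ℝ (subset_tsupport _ fun h => hx ?_))
    simp [hf, h]
  have hray : ∀ θ, ENNReal.ofReal (|v z| ^ 2) ≤ ENNReal.ofReal (R ^ α / α) *
      ∫⁻ r in Set.Ioi (0 : ℝ), ENNReal.ofReal r * ENNReal.ofReal (f (z + r • unitDir θ)) := by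
    intro θ
    have hline : ∀ r : ℝ, HasDerivAt (fun r : ℝ => z + r • unitDir θ) (unitDir θ) r := fun r => by
      simpa using ((hasDerivAt_id r).smul_const (unitDir θ)).const_add z
    have hg : ContDiff ℝ 1 fun r : ℝ => v (z + r • unitDir θ) := by fun_prop
    have hgR : v (z + R • unitDir θ) = 0 := by
      by_contra h
      have := hΩR (hsupp (subset_tsupport v h))
      simp [norm_smul, norm_unitDir, abs_of_pos hR] at this
    have hG : Continuous fun r : ℝ => ‖fderiv ℝ v (z + r • unitDir θ)‖ := by fun_prop
    have hgG : ∀ r : ℝ, |deriv (fun r : ℝ => v (z + r • unitDir θ)) r|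
        ≤ ‖fderiv ℝ v (z + r • unitDir θ)‖ := by
      intro r
      have h := ((hv1.differentiable one_ne_zero _).hasFDerivAt.comp_hasDerivAt r (hline r)).deriv
      rw [Function.comp_def] at h
      rw [h]
      simpa [norm_unitDir] using (fderiv ℝ v (z + r • unitDir θ)).le_opNorm (unitDir θ)
    have key := sq_le_lintegral_of_eq_zero hα0 hR hg hgR hG hgG
    simp only [zero_smul, add_zero] at key
    refine key.trans (le_of_eq ?_)
    congr 1
    refine setLIntegral_congr_fun measurableSet_Ioi fun r hr => ?_
    simp [hf, norm_smul, norm_unitDir, abs_of_pos (Set.mem_Ioi.1 hr)]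
  have hmain : ENNReal.ofReal (|v z| ^ 2) * ENNReal.ofReal (2 * Real.pi)
      ≤ ENNReal.ofReal (R ^ α / α) * ENNReal.ofReal (∫ x in Ω, f x) := by
    rw [← hset, ← lintegral_polar_euclidean z hfm.ennreal_ofReal,
      ← lintegral_const_mul' _ _ ENNReal.ofReal_ne_top]
    refine le_trans (le_of_eq ?_)
      (lintegral_mono (μ := volume.restrict (Set.Ioo (-Real.pi) Real.pi)) hray)
    rw [setLIntegral_const, Real.volume_Ioo]
    congr 2
    ring
  have hI : 0 ≤ ∫ x in Ω, f x := integral_nonneg hf0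
  rw [← ENNReal.ofReal_mul (by positivity), ← ENNReal.ofReal_mul hK.le,
    ENNReal.ofReal_le_ofReal_iff (by positivity)] at hmain
  rw [div_mul_eq_mul_div, le_div_iff₀ (by positivity)]
  exact hmain
end

section
/- (Weighted Poincaré inequality for the distance weight.) Let Ω ⊂ ℝ² be a bounded open set, let z ∈ Ω, and let α ∈ (−2,2). Then there exists a constant C > 0 such that for every smooth function v : ℝ² → ℝ with compact support contained in Ω, one has ∫_Ω ‖x − z‖^α |v(x)|² dx ≤ C ∫_Ω ‖x − z‖^α ‖∇v(x)‖² dx. Consequently, on such functions the seminorm ‖∇v‖_{L²(d_z^α,Ω)} is equivalent to the full weighted H¹ norm (‖v‖²_{L²(d_z^α,Ω)} + ‖∇v‖²_{L²(d_z^α,Ω)})^{1/2}. -/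
/-!
The proof tests the divergence theorem against the radial field `F x = ‖x - z‖ ^ α • (x - z)`, whose
divergence in the plane is `(2 + α) ‖x - z‖ ^ α`. For `v` supported where `‖x - z‖ ≤ R`,
integrating `div (v² F)` gives
`(2 + α) ∫ ‖x - z‖ ^ α v² = -2 ∫ ‖x - z‖ ^ α v ∇v · (x - z)`,
and Young's inequality absorbs half of the left-hand side, leaving `R² ∫ ‖x - z‖ ^ α ‖∇v‖²` up to a
constant.

Since `F` need not be differentiable at `z`, the argument runs with the smooth weight
`(‖x - z‖² + ε) ^ (α / 2)`: there the divergence is at least `min 2 (2 + α)` times the weight, so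
the constant does not depend on `ε` (`regularized_poincare`). Letting `ε → 0` by dominated
convergence (`tendsto_regularized_integral`) only needs `‖x - z‖ ^ α` to be locally integrable,
which in dimension two holds exactly when `α > -2` (`locallyIntegrable_dist_rpow`).
-/

open MeasureTheory Filter Topology

local notation "Plane" => EuclideanSpace ℝ (Fin 2)

lemma locallyIntegrable_dist_rpow (z : Plane) {α : ℝ} (hα : -2 < α) :
    LocallyIntegrable (fun x : Plane => ‖x - z‖ ^ α) := by
  -- In polar coordinates the integral over a ball is that of `t ^ (α + 1)` over `(0, r)`.
  have hball : ∀ r : ℝ, 0 < r → IntegrableOn (fun x : Plane => ‖x‖ ^ α) (Metric.ball 0 r) := by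
    intro r hr
    rw [integrableOn_fun_norm_addHaar volume (f := fun t : ℝ => t ^ α)]
    have h := (intervalIntegral.integrableOn_Ioo_rpow_iff (s := α + 1) hr).2 (by linarith)
    refine h.congr_fun ?_ measurableSet_Ioo
    intro t ht
    simp [Real.rpow_add_one ht.1.ne', mul_comm]
  have h0 : LocallyIntegrable (fun x : Plane => ‖x‖ ^ α) := by
    intro x
    refine ⟨Metric.ball 0 (‖x‖ + 1), Metric.isOpen_ball.mem_nhds (by simp), hball _ (by positivity)⟩
  rw [locallyIntegrable_iff]
  intro k hk
  have h1 := (locallyIntegrable_iff.1 h0) ((fun x => x - z) '' k) (hk.image (by fun_prop))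
  have h2 := (measurePreserving_sub_right (volume : Measure Plane) z).integrableOn_image
    (measurableEmbedding_subRight z) (f := fun x : Plane => ‖x‖ ^ α) (s := k)
  exact h2.1 h1

/-- Passage to the limit in the regularized weight. The dominating function is the sum of the two
bounds for the weight: the limit weight itself for `α ≤ 0`, a constant on the support of `g` for
`α ≥ 0`. -/
lemma tendsto_regularized_integral (z : Plane) {α : ℝ} (hα : -2 < α) {g : Plane → ℝ}
    (hg : Continuous g) (hgs : HasCompactSupport g) :
    Tendsto (fun ε : ℝ => ∫ x, (‖x - z‖ ^ 2 + ε) ^ (α / 2) * g x) (𝓝[>] 0)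
      (𝓝 (∫ x, ‖x - z‖ ^ α * g x)) := by
  obtain ⟨R, hR⟩ := hgs.isCompact.isBounded.subset_closedBall z
  have hRx : ∀ x, g x ≠ 0 → ‖x - z‖ ≤ R := fun x hx => by
    have := hR (subset_tsupport g hx)
    rwa [Metric.mem_closedBall, dist_eq_norm] at this
  set K : ℝ := (R ^ 2 + 1) ^ (α / 2)
  have hK : 0 ≤ K := by positivity
  have hsq : ∀ x : Plane, (‖x - z‖ ^ 2) ^ (α / 2) = ‖x - z‖ ^ α := fun x => by
    rw [← Real.rpow_natCast_mul (norm_nonneg _)]; congr 1; push_cast; ring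
  refine tendsto_integral_filter_of_dominated_convergence
    (fun x => ‖x - z‖ ^ α * |g x| + K * |g x|) ?_ ?_ ?_ ?_
  · refine Eventually.of_forall fun ε => Measurable.aestronglyMeasurable ?_
    have := hg.measurable
    fun_prop
  · filter_upwards [self_mem_nhdsWithin, Ioo_mem_nhdsGT (show (0:ℝ) < 1 by norm_num)] with ε _ hε
    filter_upwards [compl_mem_ae_iff.2 (measure_singleton z)] with x hx
    have hxz : 0 < ‖x - z‖ := norm_pos_iff.2 (sub_ne_zero.2 hx)
    have he := hε.1
    rw [norm_mul, Real.norm_eq_abs (g x), Real.norm_of_nonneg (by positivity), ← add_mul]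
    rcases eq_or_ne (g x) 0 with h0 | h0
    · simp [h0]
    gcongr
    rcases le_total 0 α with h | h
    · have : (‖x - z‖ ^ 2 + ε) ^ (α / 2) ≤ K := by
        apply Real.rpow_le_rpow (by positivity) _ (by linarith)
        have := hRx x h0
        gcongr
        exact hε.2.le
      have : 0 ≤ ‖x - z‖ ^ α := by positivity
      linarith
    · have : (‖x - z‖ ^ 2 + ε) ^ (α / 2) ≤ (‖x - z‖ ^ 2) ^ (α / 2) :=
        Real.rpow_le_rpow_of_nonpos (by positivity) (by linarith) (by linarith)
      rw [hsq] at this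
      linarith
  · have h1 := (locallyIntegrable_dist_rpow z hα).integrable_smul_right_of_hasCompactSupport
      hg.abs hgs.abs
    have h2 := (hg.abs.integrable_of_hasCompactSupport (μ := volume) hgs.abs).const_mul K
    exact h1.add h2
  · filter_upwards [compl_mem_ae_iff.2 (measure_singleton z)] with x hx
    have hxz : 0 < ‖x - z‖ := norm_pos_iff.2 (sub_ne_zero.2 hx)
    rw [← hsq]
    refine Tendsto.mul_const _ ?_
    refine Tendsto.mono_left ?_ nhdsWithin_le_nhds
    have : ContinuousAt (fun ε : ℝ => (‖x - z‖ ^ 2 + ε) ^ (α / 2)) 0 :=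
      ContinuousAt.rpow_const (by fun_prop) (Or.inl (by simpa using hxz.ne'))
    simpa [ContinuousAt] using this

/-- The Poincaré inequality for the regularized weight, with a constant independent of `ε`. -/
lemma regularized_poincare (z : Plane) {α c R ε : ℝ} (hc : 0 < c) (hc2 : c ≤ 2) (hcα : c ≤ 2 + α)
    (hε : 0 < ε) {v : Plane → ℝ} (hv : ContDiff ℝ (⊤ : ℕ∞) v) (hvs : HasCompactSupport v)
    (hR : ∀ x ∈ tsupport v, ‖x - z‖ ≤ R) :
    ∫ x, (‖x - z‖ ^ 2 + ε) ^ (α / 2) * |v x| ^ 2 ≤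
      4 * R ^ 2 / c ^ 2 * ∫ x, (‖x - z‖ ^ 2 + ε) ^ (α / 2) * ‖fderiv ℝ v x‖ ^ 2 := by
  have hv1 : ContDiff ℝ 1 v := hv.of_le (by exact_mod_cast le_top)
  have hpos : ∀ x : Plane, 0 < ‖x - z‖ ^ 2 + ε := fun x => by positivity
  set w : Plane → ℝ := fun x => (‖x - z‖ ^ 2 + ε) ^ (α / 2) with hw
  have hwC : ContDiff ℝ 1 w := by
    apply ContDiff.rpow_const_of_ne
    · exact (((contDiff_id.sub contDiff_const).norm_sq ℝ).add contDiff_const)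
    · exact fun x => (hpos x).ne'
  have hwc : Continuous w := hwC.continuous
  have hdv : Continuous (fderiv ℝ v) := hv1.continuous_fderiv (by norm_num)
  -- The components of the field `v² w (x - z)`; each has a partial derivative of integral zero.
  let G : Fin 2 → Plane → ℝ := fun i x => w x * (x i - z i) * v x ^ 2
  have hGC : ∀ i, ContDiff ℝ 1 (G i) := fun i => by
    have : ContDiff ℝ 1 (fun x : Plane => x i - z i) := by fun_prop
    exact (hwC.mul this).mul (hv1.pow 2)
  have hGs : ∀ i, HasCompactSupport (G i) := fun i =>
    hvs.mono' (fun x hx => subset_tsupport v (fun h => hx (by simp [G, h])))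
  let e : Fin 2 → Plane := fun i => EuclideanSpace.single i 1
  have hGi : ∀ i, Integrable (fun x => fderiv ℝ (G i) x (e i)) := fun i =>
    (((hGC i).continuous_fderiv (by norm_num)).clm_apply
      continuous_const).integrable_of_hasCompactSupport ((hGs i).fderiv_apply ℝ (e i))
  have hG0 : ∀ i, ∫ x, fderiv ℝ (G i) x (e i) = 0 := fun i => by
    have := integral_mul_fderiv_eq_neg_fderiv_mul_of_integrable (μ := volume) (v := e i)
      (f := fun _ : Plane => (1:ℝ)) (g := G i) (by simp) (by simpa using hGi i)
      (by simpa using (hGC i).continuous.integrable_of_hasCompactSupport (hGs i))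
      (by fun_prop) (fun x _ => ((hGC i).differentiable (by norm_num)).differentiableAt)
    simpa using this
  have hderiv : ∀ i x, fderiv ℝ (G i) x (e i) =
      (α * (‖x - z‖ ^ 2 + ε) ^ (α / 2 - 1) * (x i - z i) * (x i - z i) + w x) * v x ^ 2
        + w x * (x i - z i) * (2 * v x * fderiv ℝ v x (e i)) := by
    intro i x
    have h1 : HasFDerivAt (fun x : Plane => ‖x - z‖ ^ 2 + ε)
        (2 • (innerSL ℝ (x - z)).comp (ContinuousLinearMap.id ℝ Plane)) x :=
      (((hasFDerivAt_id x).sub_const z).norm_sq).add_const ε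
    have h2 := h1.rpow_const (p := α / 2) (Or.inl (hpos x).ne')
    have h3 : HasFDerivAt (fun x : Plane => x i - z i) (EuclideanSpace.proj i : Plane →L[ℝ] ℝ) x :=
      (EuclideanSpace.proj i : Plane →L[ℝ] ℝ).hasFDerivAt.sub_const (z i)
    have h4 := (hv1.differentiable (by norm_num) x).hasFDerivAt
    have h5 := (h2.mul h3).mul (h4.pow 2)
    rw [show fderiv ℝ (G i) x = _ from h5.fderiv]
    simp [e, hw, EuclideanSpace.inner_single_right]
    ring
  have hI1 : Integrable (fun x => w x * |v x| ^ 2) := by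
    apply Continuous.integrable_of_hasCompactSupport
    · have := hv1.continuous
      fun_prop
    · exact hvs.mono' (fun x hx => subset_tsupport v (fun h => hx (by simp [h])))
  have hI2 : Integrable (fun x => w x * ‖fderiv ℝ v x‖ ^ 2) := by
    apply Continuous.integrable_of_hasCompactSupport
    · fun_prop
    · exact (hvs.fderiv ℝ).mono (fun x hx h => hx (by simp [h]))
  have hpt : ∀ x, c / 2 * (w x * |v x| ^ 2) - 2 * R ^ 2 / c * (w x * ‖fderiv ℝ v x‖ ^ 2) ≤
      fderiv ℝ (G 0) x (e 0) + fderiv ℝ (G 1) x (e 1) := by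
    intro x
    by_cases hx : x ∈ tsupport v
    swap
    · have h1 : v x = 0 := image_eq_zero_of_notMem_tsupport hx
      have h2 : fderiv ℝ v x = 0 :=
        image_eq_zero_of_notMem_tsupport (fun h => hx (tsupport_fderiv_subset ℝ h))
      simp [hderiv, h1, h2]
    rw [hderiv, hderiv]
    have hRx := hR x hx
    have hn : ‖x - z‖ ^ 2 = (x 0 - z 0) ^ 2 + (x 1 - z 1) ^ 2 := by
      simp [EuclideanSpace.norm_sq_eq]
    have hlin : (x 0 - z 0) * fderiv ℝ v x (e 0) + (x 1 - z 1) * fderiv ℝ v x (e 1)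
        = fderiv ℝ v x (x - z) := by
      have : x - z = (x 0 - z 0) • e 0 + (x 1 - z 1) • e 1 := by
        ext i; fin_cases i <;> simp [e]
      conv_rhs => rw [this]
      simp only [map_add, map_smul, smul_eq_mul]
    have hw0 : 0 < w x := Real.rpow_pos_of_pos (hpos x) _
    -- The divergence of `w (x - z)` dominates `c w`: after dividing by the power with exponent
    -- `α / 2 - 1`, the difference is `(2 + α - c) ‖x - z‖² + (2 - c) ε`.
    have hdiv : c * w x ≤ α * (‖x - z‖ ^ 2 + ε) ^ (α / 2 - 1) * ‖x - z‖ ^ 2 + 2 * w x := by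
      have hq : w x = (‖x - z‖ ^ 2 + ε) ^ (α / 2 - 1) * (‖x - z‖ ^ 2 + ε) := by
        rw [← Real.rpow_add_one (hpos x).ne']; simp [hw]
      have hq0 : 0 < (‖x - z‖ ^ 2 + ε) ^ (α / 2 - 1) := Real.rpow_pos_of_pos (hpos x) _
      rw [hq]
      have : 0 ≤ (2 + α - c) * ‖x - z‖ ^ 2 + (2 - c) * ε :=
        add_nonneg (mul_nonneg (by linarith) (by positivity)) (mul_nonneg (by linarith) hε.le)
      nlinarith [mul_nonneg hq0.le this]
    have hD : |fderiv ℝ v x (x - z)| ≤ R * ‖fderiv ℝ v x‖ := by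
      calc _ ≤ ‖fderiv ℝ v x‖ * ‖x - z‖ := (fderiv ℝ v x).le_opNorm _
        _ ≤ _ := by rw [mul_comm]; gcongr
    have hD2 : (fderiv ℝ v x (x - z)) ^ 2 ≤ R ^ 2 * ‖fderiv ℝ v x‖ ^ 2 := by
      rw [← sq_abs, ← mul_pow]; gcongr
    -- Young's inequality, balanced so that half of the coercive term survives.
    have hY : -(2 * v x * fderiv ℝ v x (x - z)) ≤
        c / 2 * v x ^ 2 + 2 * R ^ 2 / c * ‖fderiv ℝ v x‖ ^ 2 := by
      have h1 : 2 / c * (fderiv ℝ v x (x - z)) ^ 2 ≤ 2 * R ^ 2 / c * ‖fderiv ℝ v x‖ ^ 2 := by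
        calc _ ≤ 2 / c * (R ^ 2 * ‖fderiv ℝ v x‖ ^ 2) := by gcongr
          _ = _ := by ring
      have h2 : 0 ≤ (c / 2) * (v x + 2 / c * fderiv ℝ v x (x - z)) ^ 2 := by positivity
      have h3 : (c / 2) * (v x + 2 / c * fderiv ℝ v x (x - z)) ^ 2 =
        c / 2 * v x ^ 2 + 2 * v x * fderiv ℝ v x (x - z) + 2 / c * (fderiv ℝ v x (x - z)) ^ 2 := by
        field_simp; ring
      linarith
    have hA := mul_le_mul_of_nonneg_right hdiv (sq_nonneg (v x))
    have hB := mul_le_mul_of_nonneg_left hY hw0.le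
    rw [← hlin] at hB
    rw [sq_abs]
    set q := (‖x - z‖ ^ 2 + ε) ^ (α / 2 - 1)
    rw [hn] at hA
    linarith
  have hint := integral_mono ((hI1.const_mul (c / 2)).sub (hI2.const_mul (2 * R ^ 2 / c)))
    ((hGi 0).add (hGi 1)) hpt
  simp only [Pi.sub_apply, Pi.add_apply] at hint
  rw [integral_add (hGi 0) (hGi 1), hG0, hG0,
    integral_sub (hI1.const_mul (c / 2)) (hI2.const_mul (2 * R ^ 2 / c)),
    integral_const_mul, integral_const_mul] at hint
  have := mul_le_mul_of_nonneg_left hint (show 0 ≤ 2 / c by positivity)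
  have h4 : 2 / c * (c / 2 * (∫ x, w x * |v x| ^ 2) - 2 * R ^ 2 / c * ∫ x, w x * ‖fderiv ℝ v x‖ ^ 2)
    = (∫ x, w x * |v x| ^ 2) - 4 * R ^ 2 / c ^ 2 * ∫ x, w x * ‖fderiv ℝ v x‖ ^ 2 := by
    field_simp; ring
  linarith

/-- Weighted Poincaré inequality for the distance weight `d_z^α`, `α ∈ (-2,2)`:
`∫_Ω ‖x-z‖^α |v|² ≤ C ∫_Ω ‖x-z‖^α ‖∇v‖²` for smooth `v` compactly supported in `Ω`. -/
theorem weighted_poincare_distance_weight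
    (Ω : Set (EuclideanSpace ℝ (Fin 2))) (hΩo : IsOpen Ω) (hΩb : Bornology.IsBounded Ω)
    (z : EuclideanSpace ℝ (Fin 2)) (hz : z ∈ Ω)
    (α : ℝ) (hα : α ∈ Set.Ioo (-2 : ℝ) 2) :
    ∃ C : ℝ, 0 < C ∧
      ∀ v : EuclideanSpace ℝ (Fin 2) → ℝ,
        ContDiff ℝ (⊤ : ℕ∞) v → HasCompactSupport v → tsupport v ⊆ Ω →
        (∫ x in Ω, ‖x - z‖ ^ α * |v x| ^ 2) ≤
          C * ∫ x in Ω, ‖x - z‖ ^ α * ‖fderiv ℝ v x‖ ^ 2 := by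
  obtain ⟨R, hR0, hR⟩ := hΩb.subset_closedBall_lt 0 z
  set c : ℝ := min 2 (2 + α)
  have hc : 0 < c := lt_min (by norm_num) (by linarith [hα.1])
  refine ⟨4 * R ^ 2 / c ^ 2, by positivity, fun v hv hvs hvΩ => ?_⟩
  have hv1 : ContDiff ℝ 1 v := hv.of_le (by exact_mod_cast le_top)
  have hvc := hv1.continuous
  have hdv : Continuous (fderiv ℝ v) := hv1.continuous_fderiv (by norm_num)
  rw [setIntegral_eq_integral_of_forall_compl_eq_zero, setIntegral_eq_integral_of_forall_compl_eq_zero]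
  · have h1 := tendsto_regularized_integral z hα.1 (g := fun x => |v x| ^ 2) (by fun_prop)
      (hvs.mono (fun x hx h => hx (by simp [h])))
    have h2 := tendsto_regularized_integral z hα.1 (g := fun x => ‖fderiv ℝ v x‖ ^ 2) (by fun_prop)
      ((hvs.fderiv ℝ).mono (fun x hx h => hx (by simp [h])))
    refine le_of_tendsto_of_tendsto h1 (h2.const_mul _) ?_
    filter_upwards [self_mem_nhdsWithin] with ε hε
    refine regularized_poincare z hc (min_le_left _ _) (min_le_right _ _) hε hv hvs fun x hx => ?_
    simpa [dist_eq_norm] using hR (hvΩ hx)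
  · intro x hx
    simp [image_eq_zero_of_notMem_tsupport
      (fun h => hx (hvΩ (tsupport_fderiv_subset ℝ h)) : x ∉ tsupport (fderiv ℝ v))]
  · intro x hx
    simp [image_eq_zero_of_notMem_tsupport (fun h => hx (hvΩ h))]
end

section
/- (Weighted Sobolev embedding H¹₀(d_z^α,Ω) ↪ L⁴(d_z^α,Ω) in two dimensions.) Let Ω ⊂ ℝ² be a bounded open set, let z ∈ Ω, and let α ∈ (−2,2). Then there exists a constant C > 0 such that for every smooth function v : ℝ² → ℝ with compact support contained in Ω, one has ( ∫_Ω ‖x − z‖^α |v(x)|⁴ dx )^{1/4} ≤ C ( ∫_Ω ‖x − z‖^α ‖∇v(x)‖² dx )^{1/2}. -/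
/-!
The proof works with the regularized weight `q = ‖x - z‖² + ε`, which is smooth and positive, and
obtains a bound `∫ q^(α/2) v⁴ ≤ C (∫ q^(α/2) ‖∇v‖²)²` with `C` independent of `ε ∈ (0, 1)`. Letting
`ε → 0` by dominated convergence (`tendsto_integral_regSq`; here `α > -2` makes `‖x - z‖^α` locally
integrable) and taking fourth roots gives the theorem.

For the regularized bound (`regularized_embedding`) put `s = α/4 - 1/2`, which lies in `(-1, 0)`
exactly because `α ∈ (-2, 2)`, and write
`A = ∫ q^s v²`, `B = ∫ q^(α/4) |v| ‖∇v‖`, `D = ∫ q^(α/2) ‖∇v‖²`.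

* The Gagliardo–Nirenberg–Sobolev inequality `‖u‖_{L²} ≲ ‖∇u‖_{L¹}` of the plane (`gns_two`),
  applied to `u = q^(α/4) v²`, bounds `∫ q^(α/2) v⁴` by a multiple of `(2B + (|α|/2) A)²`.
* Testing the vector field `q^s (x - z)`, whose divergence is at least `(2 + 2s) q^s`, against `v²`
  gives the Hardy-type inequality `(2 + 2s) A ≤ 2B` (`hardy_first_order`).
* As `s < 0`, the weight `q^s` is bounded below on the bounded set `Ω`. So Young's inequality bounds
  `B` by a small multiple of `A` plus a multiple of `D`, and the Hardy-type inequality allows the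
  `A` term to be absorbed: `B ≲ D`, hence also `A ≲ D`.
-/

open MeasureTheory
open Filter Topology

/-! ### The regularized weight -/

/-- The Euclidean plane. -/
abbrev E2 : Type := EuclideanSpace ℝ (Fin 2)

/-- The regularized squared distance to `z`, namely `‖x - z‖² + ε`. -/
noncomputable def regSq (z : E2) (ε : ℝ) (x : E2) : ℝ := ‖x - z‖ ^ 2 + ε

lemma regSq_pos (z : E2) {ε : ℝ} (hε : 0 < ε) (x : E2) : 0 < regSq z ε x := by
  unfold regSq; positivity

lemma hasFDerivAt_regSq_rpow (z : E2) {ε : ℝ} (hε : 0 < ε) (s : ℝ) (x : E2) :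
    HasFDerivAt (fun y => regSq z ε y ^ s)
      ((s * regSq z ε x ^ (s - 1)) • ((2 : ℝ) • innerSL ℝ (x - z))) x := by
  have h1 : HasFDerivAt (fun y : E2 => y - z) (ContinuousLinearMap.id ℝ E2) x :=
    (hasFDerivAt_id x).sub_const z
  have h2 : HasFDerivAt (regSq z ε) ((2 : ℝ) • innerSL ℝ (x - z)) x := by
    have h3 := h1.norm_sq.add_const ε
    have h4 : 2 • (innerSL ℝ (x - z)).comp (ContinuousLinearMap.id ℝ E2) =
        (2 : ℝ) • innerSL ℝ (x - z) := by
      ext y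
      simp
    rw [h4] at h3
    exact h3
  exact h2.rpow_const (Or.inl (regSq_pos z hε x).ne')

lemma contDiff_regSq_rpow (z : E2) {ε : ℝ} (hε : 0 < ε) (s : ℝ) :
    ContDiff ℝ 1 (fun y => regSq z ε y ^ s) := by
  apply ContDiff.rpow_const_of_ne
  · unfold regSq
    exact ((contDiff_id.sub contDiff_const).norm_sq ℝ).add contDiff_const
  · intro x; exact (regSq_pos z hε x).ne'

lemma continuous_regSq_rpow (z : E2) {ε : ℝ} (hε : 0 < ε) (s : ℝ) :
    Continuous (fun y => regSq z ε y ^ s) := (contDiff_regSq_rpow z hε s).continuous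

lemma norm_mul_regSq_rpow_le (z : E2) {ε : ℝ} (hε : 0 < ε) (s : ℝ) (x : E2) :
    ‖x - z‖ * regSq z ε x ^ s ≤ regSq z ε x ^ (s + 1 / 2) := by
  have hq := regSq_pos z hε x
  rw [Real.rpow_add hq, mul_comm, ← Real.sqrt_eq_rpow]
  gcongr
  apply Real.le_sqrt_of_sq_le
  unfold regSq
  linarith

/-- A continuous function that vanishes wherever a compactly supported one does is integrable. -/
lemma integrable_of_cs {f g : E2 → ℝ} (hf : Continuous f) (hg : HasCompactSupport g)
    (h : ∀ x, g x = 0 → f x = 0) : Integrable f :=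
  hf.integrable_of_hasCompactSupport
    (hg.mono fun x hx hgx => hx (h x hgx))

/-! ### Hardy and Sobolev inequalities for the regularized weight -/

/-- A first-order Hardy inequality: integration by parts of `v²` against the vector field
`q^s (x - z)`, where `q = regSq z ε`, together with `div (q^s (x - z)) ≥ (2 + 2s) q^s` for `s ≤ 0`
and `‖q^s (x - z)‖ ≤ q^(s + 1/2)`. -/
lemma hardy_first_order (z : E2) {ε : ℝ} (hε : 0 < ε) {s : ℝ} (hs : s ≤ 0)
    {v : E2 → ℝ} (hv : ContDiff ℝ 1 v) (hc : HasCompactSupport v) :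
    (2 + 2 * s) * ∫ x, regSq z ε x ^ s * v x ^ 2 ≤
      2 * ∫ x, regSq z ε x ^ (s + 1 / 2) * (|v x| * ‖fderiv ℝ v x‖) := by
  have hDv : Continuous (fderiv ℝ v) := hv.continuous_fderiv one_ne_zero
  have hq := continuous_regSq_rpow z hε
  let e : Fin 2 → E2 := fun i => EuclideanSpace.single i 1
  have hF : ∀ (i : Fin 2) (x : E2), HasFDerivAt (fun y : E2 => (y i - z i) * regSq z ε y ^ s)
      ((x i - z i) • ((s * regSq z ε x ^ (s - 1)) • ((2 : ℝ) • innerSL ℝ (x - z)))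
        + regSq z ε x ^ s • (EuclideanSpace.proj i : E2 →L[ℝ] ℝ)) x := by
    intro i x
    exact (((EuclideanSpace.proj i : E2 →L[ℝ] ℝ).hasFDerivAt (x := x)).sub_const (z i)).mul
      (hasFDerivAt_regSq_rpow z hε s x)
  have hv2 : ∀ x, HasFDerivAt (fun y => v y ^ 2) ((2 * v x) • fderiv ℝ v x) x := by
    intro x
    have := ((hv.differentiable one_ne_zero x).hasFDerivAt).pow 2
    simpa using this
  have key : ∀ i : Fin 2,
      ∫ x, ((x i - z i) * regSq z ε x ^ s) * ((2 * v x) * fderiv ℝ v x (e i)) =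
      - ∫ x, (2 * s * regSq z ε x ^ (s - 1) * (x i - z i) ^ 2 + regSq z ε x ^ s) * v x ^ 2 := by
    intro i
    have h := integral_mul_fderiv_eq_neg_fderiv_mul_of_integrable (μ := (volume : Measure E2))
      (f := fun y : E2 => (y i - z i) * regSq z ε y ^ s) (g := fun y => v y ^ 2) (v := e i)
    simp only [(hF i _).fderiv, (hv2 _).fderiv] at h
    have e1 : ∀ x : E2, ((x i - z i) • ((s * regSq z ε x ^ (s - 1)) • ((2 : ℝ) • innerSL ℝ (x - z)))
        + regSq z ε x ^ s • (EuclideanSpace.proj i : E2 →L[ℝ] ℝ)) (e i) =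
        2 * s * regSq z ε x ^ (s - 1) * (x i - z i) ^ 2 + regSq z ε x ^ s := by
      intro x
      simp [e, EuclideanSpace.inner_single_right]
      ring
    simp only [e1] at h
    refine h ?_ ?_ ?_ (fun x _ => (hF i x).differentiableAt) (fun x _ => (hv2 x).differentiableAt)
    · refine integrable_of_cs ?_ hc (fun x hx => by simp [hx])
      have := hq s; have := hq (s - 1); have := hv.continuous
      fun_prop
    · refine integrable_of_cs ?_ hc (fun x hx => by simp [hx])
      have := hq s; have := hq (s - 1); have := hv.continuous
      simp only [smul_apply]
      fun_prop
    · refine integrable_of_cs ?_ hc (fun x hx => by simp [hx])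
      have := hq s; have := hq (s - 1); have := hv.continuous
      fun_prop
  have hvc := hv.continuous
  have hqs := hq s
  have hqs1 := hq (s - 1)
  have hqs2 := hq (s + 1 / 2)
  have i1 : ∀ i : Fin 2, Integrable (fun x : E2 =>
      ((x i - z i) * regSq z ε x ^ s) * ((2 * v x) * fderiv ℝ v x (e i))) := fun i =>
    integrable_of_cs (by fun_prop) hc (fun x hx => by simp [hx])
  have i2 : ∀ i : Fin 2, Integrable (fun x : E2 =>
      (2 * s * regSq z ε x ^ (s - 1) * (x i - z i) ^ 2 + regSq z ε x ^ s) * v x ^ 2) := fun i =>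
    integrable_of_cs (by fun_prop) hc (fun x hx => by simp [hx])
  have nsq : ∀ x : E2, ‖x - z‖ ^ 2 = (x 0 - z 0) ^ 2 + (x 1 - z 1) ^ 2 := by
    intro x
    rw [EuclideanSpace.norm_sq_eq]
    simp
  -- The pointwise divergence bound is applied first, then the integration by parts in `key`.
  calc (2 + 2 * s) * ∫ x, regSq z ε x ^ s * v x ^ 2
      = ∫ x, (2 + 2 * s) * (regSq z ε x ^ s * v x ^ 2) := (integral_const_mul _ _).symm
    _ ≤ ∫ x : E2, ((2 * s * regSq z ε x ^ (s - 1) * (x 0 - z 0) ^ 2 + regSq z ε x ^ s) * v x ^ 2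
          + (2 * s * regSq z ε x ^ (s - 1) * (x 1 - z 1) ^ 2 + regSq z ε x ^ s) * v x ^ 2) := by
        refine integral_mono (integrable_of_cs (by fun_prop) hc (fun x hx => by simp [hx]))
          ((i2 0).add (i2 1)) fun x => ?_
        have hp := regSq_pos z hε x
        have h1 : regSq z ε x ^ s = regSq z ε x ^ (s - 1) * regSq z ε x := by
          rw [← Real.rpow_add_one hp.ne']; simp
        have h2 : regSq z ε x = (x 0 - z 0) ^ 2 + (x 1 - z 1) ^ 2 + ε := by
          rw [← nsq]; rfl
        have h3 : 0 ≤ regSq z ε x ^ (s - 1) := by positivity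
        have h4 : 0 ≤ (-s) * (regSq z ε x ^ (s - 1) * ε * v x ^ 2) := by
          apply mul_nonneg (by linarith); positivity
        have h5 : regSq z ε x ^ s = regSq z ε x ^ (s - 1) * ((x 0 - z 0) ^ 2 + (x 1 - z 1) ^ 2 + ε) := by
          rw [h1]; congr 1
        simp only [h5]
        nlinarith [h4]
    _ = - ∫ x : E2, (((x 0 - z 0) * regSq z ε x ^ s) * ((2 * v x) * fderiv ℝ v x (e 0)) +
          ((x 1 - z 1) * regSq z ε x ^ s) * ((2 * v x) * fderiv ℝ v x (e 1))) := by
        rw [integral_add (i1 0) (i1 1), integral_add (i2 0) (i2 1), key 0, key 1]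
        ring
    _ = ∫ x : E2, - (((x 0 - z 0) * regSq z ε x ^ s) * ((2 * v x) * fderiv ℝ v x (e 0)) +
          ((x 1 - z 1) * regSq z ε x ^ s) * ((2 * v x) * fderiv ℝ v x (e 1))) :=
        (integral_neg _).symm
    _ ≤ ∫ x, 2 * (regSq z ε x ^ (s + 1 / 2) * (|v x| * ‖fderiv ℝ v x‖)) := by
        refine integral_mono ((i1 0).add (i1 1)).neg
          (integrable_of_cs (by fun_prop) hc (fun x hx => by simp [hx])) fun x => ?_
        have hx : x - z = (x 0 - z 0) • e 0 + (x 1 - z 1) • e 1 := by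
          ext i; fin_cases i <;> simp [e]
        have h1 : fderiv ℝ v x (x - z) =
            (x 0 - z 0) * fderiv ℝ v x (e 0) + (x 1 - z 1) * fderiv ℝ v x (e 1) := by
          rw [hx]; simp
        have h2 : |fderiv ℝ v x (x - z)| ≤ ‖fderiv ℝ v x‖ * ‖x - z‖ :=
          (fderiv ℝ v x).le_opNorm _
        have hp := regSq_pos z hε x
        calc _ = -(2 * regSq z ε x ^ s * (v x * fderiv ℝ v x (x - z))) := by rw [h1]; ring
          _ ≤ |2 * regSq z ε x ^ s * (v x * fderiv ℝ v x (x - z))| := neg_le_abs _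
          _ = 2 * regSq z ε x ^ s * (|v x| * |fderiv ℝ v x (x - z)|) := by
            rw [abs_mul, abs_mul (v x), abs_of_nonneg (a := 2 * regSq z ε x ^ s) (by positivity)]
          _ ≤ 2 * regSq z ε x ^ s * (|v x| * (‖fderiv ℝ v x‖ * ‖x - z‖)) := by gcongr
          _ = 2 * ((‖x - z‖ * regSq z ε x ^ s) * (|v x| * ‖fderiv ℝ v x‖)) := by ring
          _ ≤ _ := by
            gcongr
            exact norm_mul_regSq_rpow_le z hε s x
    _ = _ := integral_const_mul _ _

/-- The Gagliardo–Nirenberg–Sobolev inequality `‖u‖_{L²} ≲ ‖∇u‖_{L¹}` in the plane, stated with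
real-valued integrals. -/
lemma gns_two : ∃ C : ℝ, 0 ≤ C ∧ ∀ u : E2 → ℝ, ContDiff ℝ 1 u → HasCompactSupport u →
    ∫ x, u x ^ 2 ≤ C * (∫ x, ‖fderiv ℝ u x‖) ^ 2 := by
  refine ⟨lintegralPowLePowLIntegralFDerivConst (volume : Measure E2) 2, NNReal.coe_nonneg _,
    fun u hu hc => ?_⟩
  have hp : Real.HolderConjugate (Module.finrank ℝ E2 : ℝ) 2 := by
    rw [finrank_euclideanSpace_fin]; exact_mod_cast Real.HolderConjugate.two_two
  have h := lintegral_pow_le_pow_lintegral_fderiv (volume : Measure E2) hu hc hp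
  have hD : Integrable (fderiv ℝ u) :=
    (hu.continuous_fderiv one_ne_zero).integrable_of_hasCompactSupport (hc.fderiv ℝ)
  have hi : Integrable (fun x => u x ^ 2) :=
    integrable_of_cs (hu.continuous.pow 2) hc (fun x hx => by simp [hx])
  have e1 : ∫⁻ x, ‖u x‖ₑ ^ (2 : ℝ) = ENNReal.ofReal (∫ x, u x ^ 2) := by
    rw [ofReal_integral_eq_lintegral_ofReal hi (Eventually.of_forall fun x => sq_nonneg _)]
    refine lintegral_congr fun x => ?_
    rw [← ofReal_norm, ENNReal.ofReal_rpow_of_nonneg (norm_nonneg _) (by norm_num)]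
    simp
  rw [e1, ← ofReal_integral_norm_eq_lintegral_enorm hD,
    ENNReal.ofReal_rpow_of_nonneg (integral_nonneg fun _ => norm_nonneg _) (by norm_num),
    ← ENNReal.ofReal_coe_nnreal, ← ENNReal.ofReal_mul (NNReal.coe_nonneg _)] at h
  have hreal := (ENNReal.ofReal_le_ofReal_iff (by positivity)).1 h
  simpa using hreal

/-- The squared embedding for the regularized weight. The constant depends only on `α` and on an
upper bound `Q` for the regularized squared distance on the set where `v` is nonzero, not on `ε`. -/
lemma regularized_embedding {α : ℝ} (hα : α ∈ Set.Ioo (-2 : ℝ) 2) (Q : ℝ) (hQ : 0 < Q) :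
    ∃ C : ℝ, 0 < C ∧ ∀ (z : E2) (ε : ℝ), 0 < ε → ∀ v : E2 → ℝ, ContDiff ℝ 1 v →
      HasCompactSupport v → (∀ x, v x ≠ 0 → regSq z ε x ≤ Q) →
      ∫ x, regSq z ε x ^ (α / 2) * v x ^ 4 ≤
        C * (∫ x, regSq z ε x ^ (α / 2) * ‖fderiv ℝ v x‖ ^ 2) ^ 2 := by
  obtain ⟨C₀, hC₀, hgns⟩ := gns_two
  obtain ⟨hα1, hα2⟩ := hα
  set s : ℝ := α / 4 - 1 / 2 with hs
  set β : ℝ := 2 + 2 * s with hβ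
  have hβ0 : 0 < β := by rw [hβ, hs]; linarith
  have hs0 : s ≤ 0 := by rw [hs]; linarith
  have hs1 : s + 1 / 2 = α / 4 := by rw [hs]; ring
  set M : ℝ := Q ^ (-s) with hM
  have hM0 : 0 < M := by positivity
  set K : ℝ := (2 + |α| / 2 * (2 / β)) * (2 * M / β) with hK
  refine ⟨C₀ * K ^ 2 + 1, by positivity, fun z ε hε v hv hc hvQ => ?_⟩
  have hardy := hardy_first_order z hε hs0 hv hc
  rw [hs1, ← hβ] at hardy
  have hDv : Continuous (fderiv ℝ v) := hv.continuous_fderiv one_ne_zero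
  have hvc := hv.continuous
  have hq1 := continuous_regSq_rpow z hε s
  have hq2 := continuous_regSq_rpow z hε (α / 4)
  have hq3 := continuous_regSq_rpow z hε (α / 2)
  set A := ∫ x, regSq z ε x ^ s * v x ^ 2 with hA
  set B := ∫ x, regSq z ε x ^ (α / 4) * (|v x| * ‖fderiv ℝ v x‖) with hB
  set D := ∫ x, regSq z ε x ^ (α / 2) * ‖fderiv ℝ v x‖ ^ 2 with hD
  have iA : Integrable (fun x => regSq z ε x ^ s * v x ^ 2) :=
    integrable_of_cs (by fun_prop) hc (fun x hx => by simp [hx])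
  have iB : Integrable (fun x => regSq z ε x ^ (α / 4) * (|v x| * ‖fderiv ℝ v x‖)) :=
    integrable_of_cs (by fun_prop) hc (fun x hx => by simp [hx])
  have iD : Integrable (fun x => regSq z ε x ^ (α / 2) * ‖fderiv ℝ v x‖ ^ 2) :=
    Continuous.integrable_of_hasCompactSupport (by fun_prop)
      ((hc.fderiv ℝ).mono fun x hx h0 => hx (by simp [h0]))
  have hA0 : 0 ≤ A := integral_nonneg fun x => by
    have := regSq_pos z hε x; positivity
  have hD0 : 0 ≤ D := integral_nonneg fun x => by
    have := regSq_pos z hε x; positivity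
  have hAB : A ≤ 2 / β * B := by
    rw [div_mul_eq_mul_div, le_div_iff₀ hβ0]; linarith
  -- The coefficient `β / 4` of `A` is chosen so that, by `hAB`, that term is at most `B / 2`.
  have hBD : B ≤ β / 4 * A + M / β * D := by
    rw [hA, hB, hD, ← integral_const_mul, ← integral_const_mul,
      ← integral_add (iA.const_mul _) (iD.const_mul _)]
    refine integral_mono iB ((iA.const_mul _).add (iD.const_mul _)) fun x => ?_
    have hp := regSq_pos z hε x
    have hsq : regSq z ε x ^ (α / 2) = (regSq z ε x ^ (α / 4)) ^ 2 := by
      rw [← Real.rpow_natCast, ← Real.rpow_mul hp.le]; congr 1; push_cast; ring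
    have h1 : v x ^ 2 ≤ M * (regSq z ε x ^ s * v x ^ 2) := by
      by_cases h0 : v x = 0
      · simp [h0]
      have h2 : 1 ≤ M * regSq z ε x ^ s := by
        have h3 : regSq z ε x ^ (-s) ≤ M :=
          Real.rpow_le_rpow hp.le (hvQ x h0) (by linarith)
        rw [Real.rpow_neg hp.le] at h3
        rwa [inv_le_iff_one_le_mul₀ (by positivity)] at h3
      nlinarith [mul_le_mul_of_nonneg_right h2 (sq_nonneg (v x))]
    simp only [hsq]
    set a := regSq z ε x ^ (α / 4) * ‖fderiv ℝ v x‖ with ha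
    have h4 : |v x| * a ≤ β / (4 * M) * v x ^ 2 + M / β * a ^ 2 := by
      have h5 : β / (4 * M) * v x ^ 2 + M / β * a ^ 2 - |v x| * a =
          β / (4 * M) * (|v x| - 2 * M / β * a) ^ 2 := by
        rw [← sq_abs (v x)]
        field_simp
        ring
      have h6 : 0 ≤ β / (4 * M) * (|v x| - 2 * M / β * a) ^ 2 := by positivity
      linarith
    have h7 : β / (4 * M) * v x ^ 2 ≤ β / 4 * (regSq z ε x ^ s * v x ^ 2) := by
      calc _ ≤ β / (4 * M) * (M * (regSq z ε x ^ s * v x ^ 2)) := by gcongr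
        _ = _ := by field_simp
    calc _ = |v x| * a := by rw [ha]; ring
      _ ≤ _ := h4
      _ ≤ β / 4 * (regSq z ε x ^ s * v x ^ 2) + M / β * a ^ 2 := by linarith
      _ = _ := by rw [ha]; ring
  have hBD2 : B ≤ 2 * M / β * D := by
    have h1 : 2 * M / β * D = 2 * (M / β * D) := by ring
    rw [h1]; linarith
  have hu2 : ∀ x, HasFDerivAt (fun y => regSq z ε y ^ (α / 4) * v y ^ 2)
      (regSq z ε x ^ (α / 4) • ((2 * v x) • fderiv ℝ v x) + v x ^ 2 •
        ((α / 4 * regSq z ε x ^ (α / 4 - 1)) • ((2 : ℝ) • innerSL ℝ (x - z)))) x := by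
    intro x
    have h1 := ((hv.differentiable one_ne_zero x).hasFDerivAt).pow 2
    have h2 := (hasFDerivAt_regSq_rpow z hε (α / 4) x).mul h1
    have h3 : (2 • v x ^ (2 - 1)) • fderiv ℝ v x = (2 * v x) • fderiv ℝ v x := by simp
    rw [h3] at h2
    exact h2
  have hucd : ContDiff ℝ 1 (fun y => regSq z ε y ^ (α / 4) * v y ^ 2) :=
    (contDiff_regSq_rpow z hε _).mul (hv.pow 2)
  have huc : HasCompactSupport (fun y => regSq z ε y ^ (α / 4) * v y ^ 2) :=
    hc.mono fun x hx h0 => hx (by simp [h0])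
  have hgrad : ∫ x, ‖fderiv ℝ (fun y => regSq z ε y ^ (α / 4) * v y ^ 2) x‖ ≤
      2 * B + |α| / 2 * A := by
    rw [hA, hB, ← integral_const_mul, ← integral_const_mul,
      ← integral_add (iB.const_mul _) (iA.const_mul _)]
    refine integral_mono ((hucd.continuous_fderiv one_ne_zero).integrable_of_hasCompactSupport
      (huc.fderiv ℝ)).norm ((iB.const_mul _).add (iA.const_mul _)) fun x => ?_
    have hp := regSq_pos z hε x
    have h3 : ‖x - z‖ * regSq z ε x ^ (α / 4 - 1) ≤ regSq z ε x ^ s := by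
      have := norm_mul_regSq_rpow_le z hε (α / 4 - 1) x
      rwa [show α / 4 - 1 + 1 / 2 = s by rw [hs]; ring] at this
    simp only [(hu2 x).fderiv]
    refine (norm_add_le _ _).trans ?_
    simp only [norm_smul, innerSL_apply_norm, Real.norm_eq_abs, abs_mul, abs_pow, sq_abs,
      abs_of_pos (Real.rpow_pos_of_pos hp _), abs_div]
    rw [abs_of_pos (by norm_num : (0 : ℝ) < 2), abs_of_pos (by norm_num : (0 : ℝ) < 4)]
    have h4 := mul_le_mul_of_nonneg_left h3 (by positivity : 0 ≤ |α| / 2 * v x ^ 2)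
    nlinarith [h4]
  have hgrad2 : ∫ x, ‖fderiv ℝ (fun y => regSq z ε y ^ (α / 4) * v y ^ 2) x‖ ≤ K * D := by
    calc _ ≤ 2 * B + |α| / 2 * A := hgrad
      _ ≤ 2 * B + |α| / 2 * (2 / β * B) := by gcongr
      _ = (2 + |α| / 2 * (2 / β)) * B := by ring
      _ ≤ (2 + |α| / 2 * (2 / β)) * (2 * M / β * D) := by gcongr
      _ = K * D := by rw [hK]; ring
  calc ∫ x, regSq z ε x ^ (α / 2) * v x ^ 4
      = ∫ x, (regSq z ε x ^ (α / 4) * v x ^ 2) ^ 2 := by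
        congr 1; ext x
        have hp := regSq_pos z hε x
        have hsq : regSq z ε x ^ (α / 2) = (regSq z ε x ^ (α / 4)) ^ 2 := by
          rw [← Real.rpow_natCast, ← Real.rpow_mul hp.le]; congr 1; push_cast; ring
        rw [hsq]; ring
    _ ≤ C₀ * (∫ x, ‖fderiv ℝ (fun y => regSq z ε y ^ (α / 4) * v y ^ 2) x‖) ^ 2 :=
        hgns _ hucd huc
    _ ≤ C₀ * (K * D) ^ 2 := by
        gcongr
    _ ≤ (C₀ * K ^ 2 + 1) * D ^ 2 := by nlinarith [sq_nonneg D]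

/-! ### Passage to the limit -/

/-- Removal of the regularization. The dominating weight is `‖x - z‖^α + (‖x - z‖² + 1)^(α/2)`: its
first term serves for `α ≤ 0`, its second for `α ≥ 0`. -/
lemma tendsto_integral_regSq {α : ℝ} (hα : -2 < α) (z : E2) {g : E2 → ℝ} (hg : Continuous g)
    (hc : HasCompactSupport g) :
    Tendsto (fun ε => ∫ x, regSq z ε x ^ (α / 2) * g x) (𝓝[>] 0)
      (𝓝 (∫ x, ‖x - z‖ ^ α * g x)) := by
  have hloc : LocallyIntegrable (fun x : E2 => ‖x‖ ^ α) := by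
    refine locallyIntegrable_of_norm_le_rpow (C := 1) (α := -α) (by simp)
      (by simp; linarith) (Eventually.of_forall fun x => ?_)
      (measurable_norm.pow_const α).aestronglyMeasurable
    rw [Real.norm_of_nonneg (by positivity)]; simp
  have hi : Integrable (fun x : E2 => ‖x - z‖ ^ α * |g x|) := by
    have h1 : Integrable (fun x : E2 => ‖x‖ ^ α * |g (x + z)|) :=
      hloc.integrable_smul_right_of_hasCompactSupport (g := fun x => |g (x + z)|)
        (by fun_prop) (by
          have := hc.comp_homeomorph (Homeomorph.addRight z)
          exact this.abs)
    simpa using h1.comp_sub_right z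
  have hsq : ∀ x : E2, (‖x - z‖ ^ 2) ^ (α / 2) = ‖x - z‖ ^ α := by
    intro x
    rw [← Real.rpow_natCast, ← Real.rpow_mul (norm_nonneg _)]
    congr 1; push_cast; ring
  have hz : ∀ᵐ x : E2, x ≠ z := by
    simp [ae_iff]
  refine tendsto_integral_filter_of_dominated_convergence
    (fun x => ‖x - z‖ ^ α * |g x| + regSq z 1 x ^ (α / 2) * |g x|) ?_ ?_ ?_ ?_
  · filter_upwards [self_mem_nhdsWithin] with ε hε
    exact ((continuous_regSq_rpow z hε _).mul hg).aestronglyMeasurable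
  · filter_upwards [self_mem_nhdsWithin, nhdsWithin_le_nhds (Iio_mem_nhds one_pos)] with ε hε hε1
    filter_upwards [hz] with x hx
    have hp := regSq_pos z hε x
    have hp1 := regSq_pos z one_pos x
    have hx0 : 0 < ‖x - z‖ := norm_pos_iff.2 (sub_ne_zero.2 hx)
    rw [norm_mul, Real.norm_of_nonneg (by positivity), Real.norm_eq_abs, ← add_mul]
    gcongr
    have ha : 0 < ‖x - z‖ ^ α := by positivity
    have hb : 0 < regSq z 1 x ^ (α / 2) := by positivity
    rcases le_total 0 α with h | h
    · have : regSq z ε x ^ (α / 2) ≤ regSq z 1 x ^ (α / 2) := by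
        refine Real.rpow_le_rpow hp.le ?_ (by linarith)
        unfold regSq; simp at hε1; linarith
      linarith
    · have : regSq z ε x ^ (α / 2) ≤ ‖x - z‖ ^ α := by
        rw [← hsq]
        refine Real.rpow_le_rpow_of_nonpos (by positivity) ?_ (by linarith)
        unfold regSq; simp at hε; linarith
      linarith
  · exact hi.add (integrable_of_cs ((continuous_regSq_rpow z one_pos _).mul hg.abs) hc
      fun x hx => by simp [hx])
  · filter_upwards [hz] with x hx
    have hx0 : 0 < ‖x - z‖ := norm_pos_iff.2 (sub_ne_zero.2 hx)
    refine Tendsto.mul_const _ ?_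
    rw [← hsq]
    refine Tendsto.rpow_const ?_ (Or.inl (by positivity))
    have : Tendsto (fun ε : ℝ => ‖x - z‖ ^ 2 + ε) (𝓝 0) (𝓝 (‖x - z‖ ^ 2 + 0)) := by
      exact tendsto_const_nhds.add tendsto_id
    rw [add_zero] at this
    exact this.mono_left nhdsWithin_le_nhds

/-- Weighted Sobolev embedding `H¹₀(d_z^α, Ω) ↪ L⁴(d_z^α, Ω)` in two dimensions, for
`α ∈ (-2,2)`: `(∫_Ω ‖x-z‖^α |v|⁴)^{1/4} ≤ C (∫_Ω ‖x-z‖^α ‖∇v‖²)^{1/2}`. -/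
theorem weighted_sobolev_embedding_L4
    (Ω : Set (EuclideanSpace ℝ (Fin 2))) (hΩo : IsOpen Ω) (hΩb : Bornology.IsBounded Ω)
    (z : EuclideanSpace ℝ (Fin 2)) (hz : z ∈ Ω)
    (α : ℝ) (hα : α ∈ Set.Ioo (-2 : ℝ) 2) :
    ∃ C : ℝ, 0 < C ∧
      ∀ v : EuclideanSpace ℝ (Fin 2) → ℝ,
        ContDiff ℝ (⊤ : ℕ∞) v → HasCompactSupport v → tsupport v ⊆ Ω →
        (∫ x in Ω, ‖x - z‖ ^ α * |v x| ^ 4) ^ ((1 : ℝ) / 4) ≤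
          C * (∫ x in Ω, ‖x - z‖ ^ α * ‖fderiv ℝ v x‖ ^ 2) ^ ((1 : ℝ) / 2) := by
  obtain ⟨R, hR⟩ := hΩb.subset_closedBall z
  obtain ⟨C, hC, hmain⟩ := regularized_embedding hα (R ^ 2 + 1) (by positivity)
  refine ⟨C ^ ((1 : ℝ) / 4), by positivity, fun v hv hc hsupp => ?_⟩
  have hv1 : ContDiff ℝ 1 v := hv.of_le (by exact_mod_cast le_top)
  have e1 : ∫ x in Ω, ‖x - z‖ ^ α * |v x| ^ 4 = ∫ x, ‖x - z‖ ^ α * v x ^ 4 := by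
    rw [setIntegral_eq_integral_of_forall_compl_eq_zero]
    · simp [Even.pow_abs (by decide : Even 4)]
    · intro x hx
      simp [image_eq_zero_of_notMem_tsupport fun h => hx (hsupp h)]
  have e2 : ∫ x in Ω, ‖x - z‖ ^ α * ‖fderiv ℝ v x‖ ^ 2 =
      ∫ x, ‖x - z‖ ^ α * ‖fderiv ℝ v x‖ ^ 2 := by
    rw [setIntegral_eq_integral_of_forall_compl_eq_zero]
    intro x hx
    have : fderiv ℝ v x = 0 := by
      by_contra h
      exact hx (hsupp (support_fderiv_subset ℝ h))
    simp [this]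
  rw [e1, e2]
  set D := ∫ x, ‖x - z‖ ^ α * ‖fderiv ℝ v x‖ ^ 2
  have hD0 : 0 ≤ D := integral_nonneg fun x => by positivity
  have hlim : ∫ x, ‖x - z‖ ^ α * v x ^ 4 ≤ C * D ^ 2 := by
    refine le_of_tendsto_of_tendsto
      (tendsto_integral_regSq hα.1 z (hv1.continuous.pow 4)
        (hc.mono fun x hx h0 => hx (by simp [h0])))
      (((tendsto_integral_regSq hα.1 z ((hv1.continuous_fderiv one_ne_zero).norm.pow 2)
        ((hc.fderiv ℝ).mono fun x hx h0 => hx (by simp [h0]))).pow 2).const_mul C) ?_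
    filter_upwards [self_mem_nhdsWithin, nhdsWithin_le_nhds (Iio_mem_nhds one_pos)] with ε hε hε1
    refine hmain z ε hε v hv1 hc fun x hx => ?_
    have h1 : ‖x - z‖ ≤ R := by
      simpa [dist_eq_norm] using hR (hsupp (subset_tsupport v hx))
    have h2 : ‖x - z‖ ^ 2 ≤ R ^ 2 := by gcongr
    simp at hε1
    unfold regSq; linarith
  calc _ ≤ (C * D ^ 2) ^ ((1 : ℝ) / 4) :=
        Real.rpow_le_rpow (integral_nonneg fun x => by positivity) hlim (by norm_num)
    _ = C ^ ((1 : ℝ) / 4) * D ^ ((1 : ℝ) / 2) := by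
        rw [Real.mul_rpow hC.le (by positivity), ← Real.rpow_natCast, ← Real.rpow_mul hD0]
        norm_num
end

section
/- (Local weighted bound for point evaluation, used for the Dirac source term in the reliability proof.) Let α ∈ (0,2). There exists a constant C > 0, depending only on α, such that for every z ∈ ℝ², every r > 0, and every smooth function v : ℝ² → ℝ, one has |v(z)| ≤ C ( r^{α/2 − 1} ( ∫_{B(z,r)} ‖x − z‖^{−α} |v(x)|² dx )^{1/2} + r^{α/2} ( ∫_{B(z,r)} ‖x − z‖^{−α} ‖∇v(x)‖² dx )^{1/2} ), where B(z,r) ⊂ ℝ² is the open Euclidean ball of center z and radius r; in particular C is independent of z, r, and v. -/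
open MeasureTheory Metric

/-!
Fix a unit direction `e`. The function `t ↦ (1 - t / r) v (z + t e)` equals `v z` at `t = 0` and
vanishes at `t = r`, so the fundamental theorem of calculus along the ray gives
`|v z| ≤ ∫₀^r (|v| / r + ‖∇v‖) (z + t e) dt` (`abs_le_ray`). Integrating over all directions and
passing to polar coordinates (`lintegral_ball_polar`) turns this into
`2π |v z| ≤ ∫_{B(z,r)} ‖x - z‖⁻¹ (|v| / r + ‖∇v‖) dx`.
Writing `‖x - z‖⁻¹ = ‖x - z‖^(α/2 - 1) ‖x - z‖^(-α/2)`, the Cauchy–Schwarz inequality together with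
`∫_{B(z,r)} ‖x - z‖^(α - 2) dx = 2π r^α / α` (`lintegral_ball_rpow`) yields the bound, with
`C = (2π / α)^(1/2)`; the factor `2π ≥ 1` on the left is discarded. All integrals of nonnegative
functions are handled as lower Lebesgue integrals, and `integrable_weight` shows that the weighted
Bochner integrals of the statement agree with them.
-/

/-- The unit vector of `ℝ²` at angle `θ`. -/
noncomputable def dir (θ : ℝ) : EuclideanSpace ℝ (Fin 2) :=
  Complex.orthonormalBasisOneI.repr (Real.cos θ + Real.sin θ * Complex.I)

lemma norm_dir (θ : ℝ) : ‖dir θ‖ = 1 := by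
  rw [dir, LinearIsometryEquiv.norm_map]
  push_cast
  exact Complex.norm_cos_add_sin_mul_I θ

lemma continuous_dir : Continuous dir := by
  unfold dir
  fun_prop

/-- Integration over a disc in polar coordinates around its center. -/
lemma lintegral_ball_polar (z : EuclideanSpace ℝ (Fin 2)) (r : ℝ)
    {F : EuclideanSpace ℝ (Fin 2) → ENNReal} (hF : Measurable F) :
    ∫⁻ x in ball z r, F x =
      ∫⁻ θ in Set.Ioo (-Real.pi) Real.pi, ∫⁻ t in Set.Ioo 0 r,
        ENNReal.ofReal t * F (z + t • dir θ) := by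
  have hG : Measurable ((ball z r).indicator F) := hF.indicator measurableSet_ball
  have hmp : MeasurePreserving
      (fun w : ℂ => z + Complex.orthonormalBasisOneI.repr w) volume volume :=
    (measurePreserving_add_left volume z).comp
      (LinearIsometryEquiv.measurePreserving Complex.orthonormalBasisOneI.repr)
  have hsymm : ∀ p : ℝ × ℝ, z + Complex.orthonormalBasisOneI.repr (Complex.polarCoord.symm p)
      = z + p.1 • dir p.2 := by
    intro p
    rw [Complex.polarCoord_symm_apply, dir, ← map_smul, Complex.real_smul]
  have hmeas : Measurable fun p : ℝ × ℝ =>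
      ENNReal.ofReal p.1 * (ball z r).indicator F (z + p.1 • dir p.2) := by
    refine Measurable.mul (by fun_prop) (hG.comp ?_)
    exact (continuous_const.add
      (continuous_fst.smul (continuous_dir.comp continuous_snd))).measurable
  rw [← lintegral_indicator measurableSet_ball, ← hmp.lintegral_comp hG,
    ← Complex.lintegral_comp_polarCoord_symm]
  simp only [hsymm, smul_eq_mul]
  rw [polarCoord_target, Measure.volume_eq_prod, ← Measure.prod_restrict,
    lintegral_prod_symm _ hmeas.aemeasurable]
  refine lintegral_congr fun θ => ?_
  have hset : Set.Ioo 0 r = Set.Iio r ∩ Set.Ioi 0 := by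
    ext t; simp [and_comm]
  rw [hset, ← setLIntegral_indicator measurableSet_Iio]
  refine setLIntegral_congr_fun measurableSet_Ioi fun t ht => ?_
  have ht0 : (0 : ℝ) < t := ht
  by_cases htr : t < r
  · have h1 : z + t • dir θ ∈ ball z r := by
      simpa [norm_smul, norm_dir, abs_of_pos ht0] using htr
    simp [h1, htr]
  · have h1 : z + t • dir θ ∉ ball z r := by
      simpa [norm_smul, norm_dir, abs_of_pos ht0] using htr
    simp [h1, htr]

lemma lintegral_ball_rpow (z : EuclideanSpace ℝ (Fin 2)) {r β : ℝ} (hr : 0 < r) (hβ : -2 < β) :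
    ∫⁻ x in ball z r, ENNReal.ofReal (‖x - z‖ ^ β) =
      ENNReal.ofReal (2 * Real.pi * (r ^ (β + 2) / (β + 2))) := by
  have hinner : ∀ θ : ℝ, ∫⁻ t in Set.Ioo 0 r,
      ENNReal.ofReal t * ENNReal.ofReal (‖z + t • dir θ - z‖ ^ β)
        = ENNReal.ofReal (r ^ (β + 2) / (β + 2)) := by
    intro θ
    have h1 : ∫⁻ t in Set.Ioo 0 r,
        ENNReal.ofReal t * ENNReal.ofReal (‖z + t • dir θ - z‖ ^ β)
          = ∫⁻ t in Set.Ioo 0 r, ENNReal.ofReal (t ^ (β + 1)) := by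
      refine setLIntegral_congr_fun measurableSet_Ioo fun t ht => ?_
      have ht0 : 0 < t := ht.1
      simp only [add_sub_cancel_left, norm_smul, norm_dir, mul_one, Real.norm_eq_abs,
        abs_of_pos ht0]
      rw [← ENNReal.ofReal_mul ht0.le, Real.rpow_add_one ht0.ne', mul_comm]
    have hint : IntegrableOn (fun t : ℝ => t ^ (β + 1)) (Set.Ioo 0 r) :=
      ((intervalIntegrable_iff_integrableOn_Ioo_of_le hr.le).1
        (intervalIntegral.intervalIntegrable_rpow' (by linarith)))
    rw [h1, ← ofReal_integral_eq_lintegral_ofReal hint, ← integral_Ioc_eq_integral_Ioo,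
      ← intervalIntegral.integral_of_le hr.le, integral_rpow (Or.inl (by linarith)),
      Real.zero_rpow (by linarith)]
    · ring_nf
    · filter_upwards [self_mem_ae_restrict measurableSet_Ioo] with t ht
      exact Real.rpow_nonneg ht.1.le _
  rw [lintegral_ball_polar z r (by fun_prop)]
  simp only [hinner]
  rw [setLIntegral_const, Real.volume_Ioo, ← ENNReal.ofReal_mul
    (div_nonneg (Real.rpow_nonneg hr.le _) (by linarith))]
  ring_nf

lemma integrable_weight (z : EuclideanSpace ℝ (Fin 2)) {r α : ℝ} (hr : 0 < r) (hα : α < 2)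
    {F : EuclideanSpace ℝ (Fin 2) → ℝ} (hF : Continuous F) :
    IntegrableOn (fun x => ‖x - z‖ ^ (-α) * F x ^ 2) (ball z r) := by
  have hw : IntegrableOn (fun x => ‖x - z‖ ^ (-α)) (ball z r) := by
    refine ⟨Measurable.aestronglyMeasurable (by fun_prop), ?_⟩
    rw [hasFiniteIntegral_iff_ofReal
      (Filter.Eventually.of_forall fun x => Real.rpow_nonneg (norm_nonneg _) _),
      lintegral_ball_rpow z hr (by linarith)]
    exact ENNReal.ofReal_lt_top
  obtain ⟨M, hM⟩ := (isCompact_closedBall z r).exists_bound_of_continuousOn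
    (hF.pow 2).continuousOn
  refine Integrable.mul_bdd (c := M) hw (by fun_prop) ?_
  filter_upwards [self_mem_ae_restrict measurableSet_ball] with x hx
  exact hM x (ball_subset_closedBall hx)

/-- Cauchy–Schwarz after splitting `‖x - z‖⁻¹ = ‖x - z‖^(α/2 - 1) ‖x - z‖^(-α/2)`. -/
lemma lintegral_inv_mul_le (z : EuclideanSpace ℝ (Fin 2)) {r α : ℝ} (hr : 0 < r)
    (hα : α ∈ Set.Ioo (0 : ℝ) 2)
    {F : EuclideanSpace ℝ (Fin 2) → ℝ} (hF : Continuous F) (hF0 : ∀ x, 0 ≤ F x) :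
    ∫⁻ x in ball z r, ENNReal.ofReal (‖x - z‖⁻¹ * F x) ≤
      ENNReal.ofReal ((2 * Real.pi / α) ^ ((1 : ℝ) / 2) * r ^ (α / 2) *
        (∫ x in ball z r, ‖x - z‖ ^ (-α) * F x ^ 2) ^ ((1 : ℝ) / 2)) := by
  obtain ⟨hα0, hα2⟩ := hα
  have hsplit : ∀ x, ENNReal.ofReal (‖x - z‖⁻¹ * F x) =
      ((fun x => ENNReal.ofReal (‖x - z‖ ^ (α / 2 - 1))) *
        (fun x => ENNReal.ofReal (‖x - z‖ ^ (-α / 2) * F x))) x := by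
    intro x
    rw [Pi.mul_apply, ← ENNReal.ofReal_mul (by positivity), ← mul_assoc]
    congr 2
    -- at `x = z` both sides are `0` by the conventions for `0⁻¹` and `0 ^ s`
    rcases (norm_nonneg (x - z)).eq_or_lt with h | h
    · rw [← h, Real.zero_rpow (by linarith : α / 2 - 1 ≠ 0)]; simp
    · rw [← Real.rpow_add h, ← Real.rpow_neg_one]; ring_nf
  have hsq1 : ∀ x, ENNReal.ofReal (‖x - z‖ ^ (α / 2 - 1)) ^ (2 : ℝ) =
      ENNReal.ofReal (‖x - z‖ ^ (α - 2)) := by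
    intro x
    rw [ENNReal.ofReal_rpow_of_nonneg (by positivity) (by norm_num),
      ← Real.rpow_mul (norm_nonneg _)]
    ring_nf
  have hsq2 : ∀ x, ENNReal.ofReal (‖x - z‖ ^ (-α / 2) * F x) ^ (2 : ℝ) =
      ENNReal.ofReal (‖x - z‖ ^ (-α) * F x ^ 2) := by
    intro x
    have := hF0 x
    rw [ENNReal.ofReal_rpow_of_nonneg (by positivity) (by norm_num),
      Real.mul_rpow (by positivity) (hF0 x), ← Real.rpow_mul (norm_nonneg _), Real.rpow_two]
    ring_nf
  have hCS := ENNReal.lintegral_mul_le_Lp_mul_Lq (volume.restrict (ball z r))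
    Real.HolderConjugate.two_two
    (f := fun x => ENNReal.ofReal (‖x - z‖ ^ (α / 2 - 1)))
    (g := fun x => ENNReal.ofReal (‖x - z‖ ^ (-α / 2) * F x))
    (by fun_prop) (by fun_prop)
  have hnn : ∀ x, 0 ≤ ‖x - z‖ ^ (-α) * F x ^ 2 := fun x => by positivity
  simp only [hsq1, hsq2] at hCS
  rw [lintegral_ball_rpow z hr (by linarith), ← ofReal_integral_eq_lintegral_ofReal
    (integrable_weight z hr hα2 hF) (Filter.Eventually.of_forall hnn),
    ENNReal.ofReal_rpow_of_nonneg (by simp only [sub_add_cancel]; positivity) (by norm_num),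
    ENNReal.ofReal_rpow_of_nonneg (integral_nonneg hnn) (by norm_num),
    ← ENNReal.ofReal_mul (by simp only [sub_add_cancel]; positivity)] at hCS
  rw [lintegral_congr hsplit]
  refine hCS.trans_eq ?_
  congr 2
  rw [show 2 * Real.pi * (r ^ (α - 2 + 2) / (α - 2 + 2)) = (2 * Real.pi / α) * r ^ α by
      rw [sub_add_cancel]; ring, Real.mul_rpow (by positivity) (by positivity),
    ← Real.rpow_mul hr.le]
  ring_nf

/-- The fundamental theorem of calculus for `t ↦ (1 - t / r) v (z + t e)` on `[0, r]`. -/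
lemma abs_le_ray {v : EuclideanSpace ℝ (Fin 2) → ℝ} (hv : ContDiff ℝ (⊤ : ℕ∞) v)
    (z e : EuclideanSpace ℝ (Fin 2)) (he : ‖e‖ = 1) {r : ℝ} (hr : 0 < r) :
    ENNReal.ofReal |v z| ≤ ∫⁻ t in Set.Ioo 0 r,
      ENNReal.ofReal (r⁻¹ * |v (z + t • e)| + ‖fderiv ℝ v (z + t • e)‖) := by
  have hdv : Continuous (fderiv ℝ v) := hv.continuous_fderiv (by simp)
  have hvc : Continuous v := hv.continuous
  have hder : ∀ t ∈ Set.uIcc 0 r, HasDerivAt (fun t : ℝ => (1 - t * r⁻¹) * v (z + t • e))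
      (-r⁻¹ * v (z + t • e) + (1 - t * r⁻¹) * fderiv ℝ v (z + t • e) e) t := by
    intro t _
    have h1 : HasDerivAt (fun t : ℝ => z + t • e) e t := by
      simpa using ((hasDerivAt_id t).smul_const e).const_add z
    have h2 : HasDerivAt (fun t : ℝ => v (z + t • e)) (fderiv ℝ v (z + t • e) e) t :=
      ((hv.differentiable (by simp)) (z + t • e)).hasFDerivAt.comp_hasDerivAt t h1
    have h3 : HasDerivAt (fun t : ℝ => 1 - t * r⁻¹) (-r⁻¹) t := by
      simpa using ((hasDerivAt_id t).mul_const r⁻¹).const_sub 1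
    exact h3.mul h2
  have hcont : Continuous fun t : ℝ =>
      -r⁻¹ * v (z + t • e) + (1 - t * r⁻¹) * fderiv ℝ v (z + t • e) e := by
    fun_prop
  have hftc := intervalIntegral.integral_eq_sub_of_hasDerivAt hder
    (hcont.intervalIntegrable 0 r)
  rw [intervalIntegral.integral_of_le hr.le, integral_Ioc_eq_integral_Ioo] at hftc
  have hval : |v z| = ‖∫ t in Set.Ioo 0 r,
      (-r⁻¹ * v (z + t • e) + (1 - t * r⁻¹) * fderiv ℝ v (z + t • e) e)‖ := by
    rw [hftc]; simp [hr.ne']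
  rw [hval, ofReal_norm]
  refine (enorm_integral_le_lintegral_enorm _).trans
    (setLIntegral_mono' measurableSet_Ioo fun t ht => ?_)
  rw [← ofReal_norm]
  refine ENNReal.ofReal_le_ofReal ((norm_add_le _ _).trans (add_le_add ?_ ?_))
  · simp [abs_of_pos hr]
  · have h1 : ‖fderiv ℝ v (z + t • e) e‖ ≤ ‖fderiv ℝ v (z + t • e)‖ := by
      simpa [he] using (fderiv ℝ v (z + t • e)).le_opNorm e
    have h2 : t * r⁻¹ ≤ 1 := by
      rw [← div_eq_mul_inv, div_le_one hr]; exact ht.2.le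
    have h3 : 0 ≤ t * r⁻¹ := mul_nonneg ht.1.le (inv_nonneg.2 hr.le)
    have h4 : ‖1 - t * r⁻¹‖ ≤ 1 := by
      rw [Real.norm_eq_abs, abs_le]; constructor <;> linarith
    rw [norm_mul]
    exact (mul_le_of_le_one_left (norm_nonneg _) h4).trans h1

/-- The ray estimate integrated over all directions, in the plane. -/
lemma abs_le_lintegral_ball {v : EuclideanSpace ℝ (Fin 2) → ℝ} (hv : ContDiff ℝ (⊤ : ℕ∞) v)
    (z : EuclideanSpace ℝ (Fin 2)) {r : ℝ} (hr : 0 < r) :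
    ENNReal.ofReal (2 * Real.pi * |v z|) ≤
      ∫⁻ x in ball z r, ENNReal.ofReal (‖x - z‖⁻¹ * (r⁻¹ * |v x| + ‖fderiv ℝ v x‖)) := by
  have hdv : Continuous (fderiv ℝ v) := hv.continuous_fderiv (by simp)
  have hvc : Continuous v := hv.continuous
  rw [lintegral_ball_polar z r (by fun_prop)]
  calc ENNReal.ofReal (2 * Real.pi * |v z|)
      = ∫⁻ _ in Set.Ioo (-Real.pi) Real.pi, ENNReal.ofReal |v z| := by
        rw [setLIntegral_const, Real.volume_Ioo, ← ENNReal.ofReal_mul (abs_nonneg _)]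
        ring_nf
    _ ≤ _ := by
        refine lintegral_mono fun θ => (abs_le_ray hv z (dir θ) (norm_dir θ) hr).trans_eq ?_
        refine setLIntegral_congr_fun measurableSet_Ioo fun t ht => ?_
        have ht0 : 0 < t := ht.1
        simp only [add_sub_cancel_left, norm_smul, norm_dir, mul_one, Real.norm_eq_abs,
          abs_of_pos ht0]
        -- the Jacobian `t` cancels the kernel `‖x - z‖⁻¹ = t⁻¹`
        rw [← ENNReal.ofReal_mul ht0.le, mul_inv_cancel_left₀ (ne_of_gt ht0)]

/-- Local weighted bound for point evaluation, `α ∈ (0,2)`: with a constant `C`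
depending only on `α`, `|v(z)| ≤ C (r^{α/2-1} ‖v‖_{L²(d_z^{-α},B(z,r))}
+ r^{α/2} ‖∇v‖_{L²(d_z^{-α},B(z,r))})` for every smooth `v`, every `z` and `r > 0`. -/
theorem local_weighted_point_evaluation_bound
    (α : ℝ) (hα : α ∈ Set.Ioo (0 : ℝ) 2) :
    ∃ C : ℝ, 0 < C ∧
      ∀ (z : EuclideanSpace ℝ (Fin 2)) (r : ℝ), 0 < r →
        ∀ v : EuclideanSpace ℝ (Fin 2) → ℝ, ContDiff ℝ (⊤ : ℕ∞) v →
          |v z| ≤ C *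
            (r ^ (α / 2 - 1) *
                (∫ x in ball z r, ‖x - z‖ ^ (-α) * |v x| ^ 2) ^ ((1 : ℝ) / 2) +
              r ^ (α / 2) *
                (∫ x in ball z r, ‖x - z‖ ^ (-α) * ‖fderiv ℝ v x‖ ^ 2) ^ ((1 : ℝ) / 2)) := by
  have hα0 : 0 < α := hα.1
  refine ⟨(2 * Real.pi / α) ^ ((1 : ℝ) / 2), by positivity, fun z r hr v hv => ?_⟩
  have hdv : Continuous (fderiv ℝ v) := hv.continuous_fderiv (by simp)
  have hvc : Continuous v := hv.continuous
  have hA := lintegral_inv_mul_le z hr hα hvc.abs (fun x => abs_nonneg _)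
  have hB := lintegral_inv_mul_le z hr hα hdv.norm (fun x => norm_nonneg _)
  have hA0 : 0 ≤ ∫ x in ball z r, ‖x - z‖ ^ (-α) * |v x| ^ 2 :=
    integral_nonneg fun x => by positivity
  have hB0 : 0 ≤ ∫ x in ball z r, ‖x - z‖ ^ (-α) * ‖fderiv ℝ v x‖ ^ 2 :=
    integral_nonneg fun x => by positivity
  set A := ∫ x in ball z r, ‖x - z‖ ^ (-α) * |v x| ^ 2
  set B := ∫ x in ball z r, ‖x - z‖ ^ (-α) * ‖fderiv ℝ v x‖ ^ 2
  have hsum : ∫⁻ x in ball z r, ENNReal.ofReal (‖x - z‖⁻¹ * (r⁻¹ * |v x| + ‖fderiv ℝ v x‖)) =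
      ENNReal.ofReal r⁻¹ * (∫⁻ x in ball z r, ENNReal.ofReal (‖x - z‖⁻¹ * |v x|)) +
        ∫⁻ x in ball z r, ENNReal.ofReal (‖x - z‖⁻¹ * ‖fderiv ℝ v x‖) := by
    rw [← lintegral_const_mul _ (by fun_prop), ← lintegral_add_left (by fun_prop)]
    refine lintegral_congr fun x => ?_
    rw [← ENNReal.ofReal_mul (by positivity), ← ENNReal.ofReal_add (by positivity) (by positivity)]
    ring_nf
  have hmain := (abs_le_lintegral_ball hv z hr).trans_eq hsum |>.trans
    (add_le_add (mul_le_mul_right hA _) hB)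
  rw [← ENNReal.ofReal_mul (by positivity), ← ENNReal.ofReal_add (by positivity) (by positivity),
    ENNReal.ofReal_le_ofReal_iff (by positivity)] at hmain
  have hpi : |v z| ≤ 2 * Real.pi * |v z| :=
    le_mul_of_one_le_left (abs_nonneg _) (by linarith [Real.pi_gt_three])
  refine (hpi.trans hmain).trans_eq ?_
  rw [Real.rpow_sub_one hr.ne']
  ring
end
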